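/- arXiv:0810.4766 — 4 statements merged into one kernel-verified Lean document; each statement's English description precedes it below -/
import Mathlib

section
/- For every integer k ≥ 0, the space 𝓐̂ₖ of n-tuples of homogeneous polynomials of degree k decomposes as the internal direct sum 𝓐̂ₖ = Ĥₖ ⊕ (x₁² + ⋯ + xₙ²)·𝓐̂_{k−2} of ℝ-vector subspaces, where Ĥₖ is the space of solutions of the Navier equations in 𝓐̂ₖ and 𝓐̂_{k−2} is interpreted as {0} when k < 2. -/
open MvPolynomial

/-- The Laplacian `Δ = ∑ᵣ ∂²_{xᵣ}` on `ℝ[x₁,…,xₙ]`. -/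
noncomputable def lap {n : ℕ} (p : MvPolynomial (Fin n) ℝ) : MvPolynomial (Fin n) ℝ :=
  ∑ r : Fin n, pderiv r (pderiv r p)

/-- The Navier operator `N(u)ⱼ = Δuⱼ + b·∂_{xⱼ}(∑ᵣ ∂_{xᵣ} uᵣ)`. -/
noncomputable def navier {n : ℕ} (b : ℝ) (u : Fin n → MvPolynomial (Fin n) ℝ) :
    Fin n → MvPolynomial (Fin n) ℝ :=
  fun j => lap (u j) + b • pderiv j (∑ r : Fin n, pderiv r (u r))

/-- Membership in `(x₁²+⋯+xₙ²)·𝓐̂_{k-2}`, interpreted as `{0}` when `k < 2`. -/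
def inQA {n : ℕ} (k : ℕ) (w : Fin n → MvPolynomial (Fin n) ℝ) : Prop :=
  if 2 ≤ k then
    ∃ v : Fin n → MvPolynomial (Fin n) ℝ,
      (∀ j, (v j).IsHomogeneous (k - 2)) ∧
        w = fun j => (∑ r : Fin n, X r ^ 2) * v j
  else w = 0

/-!
Write `q = |x|²`. The operator `v ↦ N(q v)` maps tuples of homogeneous polynomials of degree `d` to
such tuples, and the decomposition in degree `k = d + 2` amounts to its bijectivity; the spaces
being finite-dimensional, injectivity is enough. Suppose `N(q v) = 0` and put `D = div(q v)`, of
degree `d + 1`. Taking the divergence of the equation gives `(b + 1) ΔD = 0`, so `D` is harmonic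
and `Δ²(q vⱼ) = -b ∂ⱼΔD = 0`. This forces `vⱼ` to be harmonic, and the equation becomes
`(2n + 4d) v = -b ∇D`. Multiplying by `q`, taking the divergence and using Euler's identity yields
`(2n + 4d) D = -2b(d + 1) D`. As `n + 2d + b(d + 1) ≠ 0`, this means `D = 0`, and then `v = 0`.
-/

open scoped Pointwise

theorem existsUnique_add_eq_of_disjoint_of_mem_sup {R M : Type*} [Ring R] [AddCommGroup M]
    [Module R M] {P Q : Submodule R M} (hPQ : Disjoint P Q) {u : M} (hu : u ∈ P ⊔ Q) :
    ∃! p : M × M, p.1 ∈ P ∧ p.2 ∈ Q ∧ u = p.1 + p.2 := by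
  obtain ⟨x, hx, y, hy, rfl⟩ := Submodule.mem_sup.mp hu
  refine ⟨(x, y), ⟨hx, hy, rfl⟩, ?_⟩
  rintro ⟨x', y'⟩ ⟨hx', hy', hxy⟩
  have hzero := Submodule.disjoint_iff_add_eq_zero.mp hPQ (sub_mem hx' hx) (sub_mem hy' hy)
    (by rw [sub_add_sub_comm, ← hxy, sub_self])
  exact Prod.ext (sub_eq_zero.mp hzero.1) (sub_eq_zero.mp hzero.2)

section Operators

variable {σ R : Type*} [CommSemiring R]

theorem pderiv_pderiv_comm (i j : σ) (p : MvPolynomial σ R) :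
    pderiv i (pderiv j p) = pderiv j (pderiv i p) := by
  obtain rfl | hij := eq_or_ne i j
  · rfl
  · ext m
    simp only [coeff_pderiv, Finsupp.add_apply, Finsupp.single_eq_of_ne hij,
      Finsupp.single_eq_of_ne hij.symm, add_right_comm m, add_zero, mul_right_comm]

theorem pderiv_pderiv_eq_zero_of_isHomogeneous {p : MvPolynomial σ R} {d : ℕ}
    (hp : p.IsHomogeneous d) (hd : d < 2) (i j : σ) : pderiv i (pderiv j p) = 0 := by
  have hj : (pderiv j p).IsHomogeneous 0 := by
    simpa [show d - 1 = 0 by omega] using hp.pderiv (i := j)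
  rw [← totalDegree_zero_iff_isHomogeneous, totalDegree_eq_zero_iff_eq_C] at hj
  rw [hj, pderiv_C]

variable [Fintype σ]

/-- The Laplacian `∑ᵢ ∂ᵢ²` on polynomials over any commutative semiring, as a linear map. -/
noncomputable def polyLaplacian : MvPolynomial σ R →ₗ[R] MvPolynomial σ R :=
  ∑ i, (pderiv i).toLinearMap ∘ₗ (pderiv i).toLinearMap

/-- The divergence `∑ᵢ ∂ᵢ uᵢ` of a polynomial vector field, as a linear map. -/
noncomputable def polyDivergence : (σ → MvPolynomial σ R) →ₗ[R] MvPolynomial σ R :=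
  ∑ i, (pderiv i).toLinearMap ∘ₗ LinearMap.proj i

/-- The Navier operator `u ↦ Δu + b ∇(div u)` on polynomial vector fields, as a linear map. -/
noncomputable def navierMap (b : R) : (σ → MvPolynomial σ R) →ₗ[R] σ → MvPolynomial σ R :=
  LinearMap.pi fun j =>
    polyLaplacian ∘ₗ LinearMap.proj j + b • (pderiv j).toLinearMap ∘ₗ polyDivergence

theorem polyLaplacian_apply (p : MvPolynomial σ R) :
    polyLaplacian p = ∑ i, pderiv i (pderiv i p) := by
  simp [polyLaplacian]

theorem polyDivergence_apply (u : σ → MvPolynomial σ R) :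
    polyDivergence u = ∑ i, pderiv i (u i) := by
  simp [polyDivergence]

theorem navierMap_apply (b : R) (u : σ → MvPolynomial σ R) (j : σ) :
    navierMap b u j = polyLaplacian (u j) + b • pderiv j (polyDivergence u) :=
  rfl

theorem pderiv_polyLaplacian (i : σ) (p : MvPolynomial σ R) :
    pderiv i (polyLaplacian p) = polyLaplacian (pderiv i p) := by
  simp only [polyLaplacian_apply, map_sum, pderiv_pderiv_comm i]

theorem polyDivergence_navierMap (b : R) (u : σ → MvPolynomial σ R) :
    polyDivergence (navierMap b u) = (b + 1) • polyLaplacian (polyDivergence u) := by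
  calc polyDivergence (navierMap b u)
      = ∑ j, polyLaplacian (pderiv j (u j)) +
          b • ∑ j, pderiv j (pderiv j (polyDivergence u)) := by
        simp only [polyDivergence_apply (navierMap b u), navierMap_apply, map_add,
          pderiv_polyLaplacian, Derivation.map_smul, Finset.sum_add_distrib, Finset.smul_sum]
    _ = (b + 1) • polyLaplacian (polyDivergence u) := by
        rw [← map_sum, ← polyDivergence_apply, ← polyLaplacian_apply, add_smul, one_smul, add_comm]

theorem isHomogeneous_polyLaplacian {p : MvPolynomial σ R} {d : ℕ} (hp : p.IsHomogeneous d) :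
    (polyLaplacian p).IsHomogeneous (d - 2) := by
  rw [polyLaplacian_apply]
  exact IsHomogeneous.sum _ _ _ fun _ _ => hp.pderiv.pderiv

theorem isHomogeneous_polyDivergence {u : σ → MvPolynomial σ R} {d : ℕ}
    (hu : ∀ j, (u j).IsHomogeneous d) : (polyDivergence u).IsHomogeneous (d - 1) := by
  rw [polyDivergence_apply]
  exact IsHomogeneous.sum _ _ _ fun j _ => (hu j).pderiv

theorem isHomogeneous_navierMap (b : R) {u : σ → MvPolynomial σ R} {d : ℕ}
    (hu : ∀ j, (u j).IsHomogeneous d) (j : σ) : (navierMap b u j).IsHomogeneous (d - 2) := by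
  rw [navierMap_apply, smul_eq_C_mul]
  exact (isHomogeneous_polyLaplacian (hu j)).add
    ((isHomogeneous_polyDivergence hu).pderiv.C_mul b)

theorem polyLaplacian_eq_zero_of_isHomogeneous {p : MvPolynomial σ R} {d : ℕ}
    (hp : p.IsHomogeneous d) (hd : d < 2) : polyLaplacian p = 0 := by
  simp [polyLaplacian_apply, pderiv_pderiv_eq_zero_of_isHomogeneous hp hd]

theorem navierMap_eq_zero_of_isHomogeneous (b : R) {u : σ → MvPolynomial σ R} {d : ℕ}
    (hu : ∀ j, (u j).IsHomogeneous d) (hd : d < 2) : navierMap b u = 0 := by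
  funext j
  simp [navierMap_apply, polyDivergence_apply, polyLaplacian_eq_zero_of_isHomogeneous (hu j) hd,
    pderiv_pderiv_eq_zero_of_isHomogeneous (hu _) hd]

theorem isHomogeneous_psum (m : ℕ) : (psum σ R m).IsHomogeneous m :=
  IsHomogeneous.sum _ _ _ fun i _ => isHomogeneous_X_pow i m

theorem pderiv_psum_two (i : σ) : pderiv i (psum σ R 2) = 2 * X i := by
  classical simp [psum, pderiv_X, Pi.single_apply]

theorem polyLaplacian_psum_two_mul {p : MvPolynomial σ R} {d : ℕ} (hp : p.IsHomogeneous d) :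
    polyLaplacian (psum σ R 2 * p) =
      (2 * Fintype.card σ + 4 * d) • p + psum σ R 2 * polyLaplacian p := by
  have leibniz (i : σ) : pderiv i (pderiv i (psum σ R 2 * p)) =
      2 * p + 4 * (X i * pderiv i p) + psum σ R 2 * pderiv i (pderiv i p) := by
    have htwo : pderiv i (2 : MvPolynomial σ R) = 0 := Derivation.map_natCast _ 2
    simp only [pderiv_mul, pderiv_psum_two, pderiv_X_self, map_add, htwo]
    ring
  simp only [polyLaplacian_apply, leibniz, Finset.sum_add_distrib, ← Finset.mul_sum,
    hp.sum_X_mul_pderiv, Finset.sum_const, Finset.card_univ, nsmul_eq_mul]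
  push_cast
  ring

theorem polyDivergence_psum_two_smul (v : σ → MvPolynomial σ R) :
    polyDivergence (psum σ R 2 • v) = 2 * ∑ i, X i * v i + psum σ R 2 * polyDivergence v := by
  simp only [polyDivergence_apply, Pi.smul_apply, smul_eq_mul, pderiv_mul, pderiv_psum_two,
    Finset.sum_add_distrib, Finset.mul_sum, mul_assoc]

theorem polyDivergence_psum_two_smul_pderiv {p : MvPolynomial σ R} {d : ℕ}
    (hp : p.IsHomogeneous d) :
    polyDivergence (psum σ R 2 • fun j => pderiv j p) =
      (2 * d) • p + psum σ R 2 * polyLaplacian p := by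
  rw [polyDivergence_psum_two_smul, hp.sum_X_mul_pderiv, polyDivergence_apply,
    ← polyLaplacian_apply, mul_smul, two_mul, two_nsmul]

end Operators

section HomogeneousTuples

variable (σ R : Type*) [CommSemiring R]

/-- The space `𝓐̂ₖ` of tuples of homogeneous polynomials of degree `k`. -/
noncomputable def homogeneousTuples (k : ℕ) : Submodule R (σ → MvPolynomial σ R) :=
  Submodule.pi Set.univ fun _ => homogeneousSubmodule σ R k

variable {σ R}

theorem mem_homogeneousTuples {k : ℕ} {u : σ → MvPolynomial σ R} :
    u ∈ homogeneousTuples σ R k ↔ ∀ j, (u j).IsHomogeneous k := by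
  simp [homogeneousTuples]

instance [Finite σ] (k : ℕ) : Module.Finite R (homogeneousTuples σ R k) :=
  Module.Finite.iff_fg.mpr <| Submodule.fg_pi fun _ => homogeneousSubmodule_fg σ R k

variable [Fintype σ]

/-- The space `Ĥₖ` of solutions of the Navier equations in `𝓐̂ₖ`. -/
noncomputable def navierSolutions (b : R) (k : ℕ) : Submodule R (σ → MvPolynomial σ R) :=
  homogeneousTuples σ R k ⊓ LinearMap.ker (navierMap b)

variable (σ R) in
/-- The space `|x|² 𝓐̂ₖ₋₂`, with `|x|²` encoded as `psum σ R 2` and `𝓐̂₋₁ = 𝓐̂₋₂ = 0`. -/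
noncomputable def sqNormMultiples : ℕ → Submodule R (σ → MvPolynomial σ R)
  | 0 => ⊥
  | 1 => ⊥
  | d + 2 => psum σ R 2 • homogeneousTuples σ R d

theorem psum_two_smul_mem_homogeneousTuples {d : ℕ} {v : σ → MvPolynomial σ R}
    (hv : v ∈ homogeneousTuples σ R d) : psum σ R 2 • v ∈ homogeneousTuples σ R (d + 2) := by
  rw [mem_homogeneousTuples] at hv ⊢
  rw [add_comm]
  exact fun j => (isHomogeneous_psum 2).mul (hv j)

theorem navierMap_mem_homogeneousTuples (b : R) {d : ℕ} {u : σ → MvPolynomial σ R}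
    (hu : u ∈ homogeneousTuples σ R (d + 2)) : navierMap b u ∈ homogeneousTuples σ R d := by
  rw [mem_homogeneousTuples] at hu ⊢
  exact isHomogeneous_navierMap b hu

theorem navierSolutions_eq_homogeneousTuples_of_lt_two (b : R) {k : ℕ} (hk : k < 2) :
    navierSolutions b k = homogeneousTuples σ R k :=
  inf_eq_left.mpr fun _ hu =>
    navierMap_eq_zero_of_isHomogeneous b (mem_homogeneousTuples.mp hu) hk

end HomogeneousTuples

section Injectivity

variable {σ R : Type*} [Fintype σ] [CommRing R] [IsDomain R]

/-- Applying `Δ` to the hypothesis gives an equation of the same shape for `Δp`. -/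
theorem eq_zero_of_nsmul_add_psum_two_mul_polyLaplacian_eq_zero [CharZero R]
    {p : MvPolynomial σ R} {d c : ℕ} (hp : p.IsHomogeneous d) (hc : c ≠ 0)
    (h : c • p + psum σ R 2 * polyLaplacian p = 0) : p = 0 := by
  induction d using Nat.strong_induction_on generalizing p c with
  | _ d ih =>
    have hharm : polyLaplacian p = 0 := by
      obtain hd | hd := lt_or_ge d 2
      · exact polyLaplacian_eq_zero_of_isHomogeneous hp hd
      · have hp' := isHomogeneous_polyLaplacian hp
        refine ih (d - 2) (by omega) (c := c + (2 * Fintype.card σ + 4 * (d - 2))) hp' (by omega) ?_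
        have h' := congrArg polyLaplacian h
        rwa [map_add, map_nsmul, polyLaplacian_psum_two_mul hp', map_zero, ← add_assoc,
          ← add_smul] at h'
    rw [hharm, mul_zero, add_zero] at h
    exact (smul_eq_zero_iff_right hc).mp h

/-- `Δ²(|x|² p)` is again of the form `c Δp + |x|² Δ(Δp)` with `c > 0`. -/
theorem polyLaplacian_eq_zero_of_biharmonic_psum_two_mul [Nonempty σ] [CharZero R]
    {p : MvPolynomial σ R} {d : ℕ} (hp : p.IsHomogeneous d)
    (h : polyLaplacian (polyLaplacian (psum σ R 2 * p)) = 0) : polyLaplacian p = 0 := by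
  have hp' := isHomogeneous_polyLaplacian hp
  rw [polyLaplacian_psum_two_mul hp, map_add, map_nsmul, polyLaplacian_psum_two_mul hp',
    ← add_assoc, ← add_smul] at h
  have hcard : Fintype.card σ ≠ 0 := Fintype.card_ne_zero
  exact eq_zero_of_nsmul_add_psum_two_mul_polyLaplacian_eq_zero hp' (by omega) h

theorem polyLaplacian_polyDivergence_eq_zero {b : R} (hb : b + 1 ≠ 0)
    {u : σ → MvPolynomial σ R} (hu : navierMap b u = 0) :
    polyLaplacian (polyDivergence u) = 0 := by
  have h := polyDivergence_navierMap b u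
  rw [hu, map_zero, eq_comm, smul_eq_zero] at h
  exact h.resolve_left hb

theorem polyLaplacian_eq_zero_of_navierMap_psum_two_smul_eq_zero [CharZero R] {b : R}
    (hb : b + 1 ≠ 0) {v : σ → MvPolynomial σ R} {d : ℕ} (hv : ∀ j, (v j).IsHomogeneous d)
    (h : navierMap b (psum σ R 2 • v) = 0) (j : σ) : polyLaplacian (v j) = 0 := by
  have : Nonempty σ := ⟨j⟩
  have hlap : polyLaplacian (psum σ R 2 * v j) =
      -(b • pderiv j (polyDivergence (psum σ R 2 • v))) :=
    eq_neg_of_add_eq_zero_left (congrFun h j)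
  refine polyLaplacian_eq_zero_of_biharmonic_psum_two_mul (hv j) ?_
  rw [hlap, map_neg, map_smul, ← pderiv_polyLaplacian, polyLaplacian_polyDivergence_eq_zero hb h,
    map_zero, smul_zero, neg_zero]

theorem eq_zero_of_navierMap_psum_two_smul_eq_zero [CharZero R] {b : R} {d : ℕ}
    (hb : b + 1 ≠ 0) (hbd : Fintype.card σ + 2 * d + b * (d + 1) ≠ 0)
    {v : σ → MvPolynomial σ R} (hv : ∀ j, (v j).IsHomogeneous d)
    (h : navierMap b (psum σ R 2 • v) = 0) : v = 0 := by
  set D := polyDivergence (psum σ R 2 • v) with hD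
  have hDharm : polyLaplacian D = 0 := polyLaplacian_polyDivergence_eq_zero hb h
  have hDhom : D.IsHomogeneous (d + 1) := by
    have := isHomogeneous_polyDivergence fun j => (isHomogeneous_psum (R := R) 2).mul (hv j)
    rwa [show 2 + d - 1 = d + 1 by omega] at this
  have hgrad : (2 * Fintype.card σ + 4 * d) • v = -(b • fun j => pderiv j D) := by
    funext j
    have hj : polyLaplacian (psum σ R 2 * v j) + b • pderiv j D = 0 := congrFun h j
    rw [polyLaplacian_psum_two_mul (hv j),
      polyLaplacian_eq_zero_of_navierMap_psum_two_smul_eq_zero hb hv h, mul_zero, add_zero] at hj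
    exact eq_neg_of_add_eq_zero_left hj
  have hDeq : (2 * Fintype.card σ + 4 * d) • D = -(b • (2 * (d + 1)) • D) := by
    rw [hD, ← map_nsmul, smul_comm, hgrad, smul_neg, smul_comm, map_neg, map_smul,
      polyDivergence_psum_two_smul_pderiv hDhom, hDharm, mul_zero, add_zero]
  have hDzero : D = 0 := by
    have : (2 * (Fintype.card σ + 2 * d + b * (d + 1))) • D = 0 := by
      linear_combination (norm := module) hDeq
    exact (smul_eq_zero.mp this).resolve_left (mul_ne_zero two_ne_zero hbd)
  funext j
  have hcard : 0 < Fintype.card σ := Fintype.card_pos_iff.mpr ⟨j⟩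
  have hj : (2 * Fintype.card σ + 4 * d) • v j = 0 := by
    simpa only [hDzero, Pi.neg_apply, Pi.smul_apply, map_zero, smul_zero, neg_zero]
      using congrFun hgrad j
  exact (smul_eq_zero_iff_right (by omega)).mp hj

theorem disjoint_navierSolutions_sqNormMultiples [CharZero R] {b : R} {k : ℕ} (hb : b + 1 ≠ 0)
    (hbk : ∀ d : ℕ, k = d + 2 → Fintype.card σ + 2 * d + b * (d + 1) ≠ 0) :
    Disjoint (navierSolutions b k) (sqNormMultiples σ R k) := by
  match k with
  | 0 | 1 => exact disjoint_bot_right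
  | d + 2 =>
    rw [Submodule.disjoint_def]
    rintro _ ⟨-, hker⟩ ⟨v, hv, rfl⟩
    have hv0 : v = 0 :=
      eq_zero_of_navierMap_psum_two_smul_eq_zero hb (hbk d rfl) (mem_homogeneousTuples.mp hv) hker
    rw [hv0, map_zero]

end Injectivity

section Decomposition

variable {σ K : Type*} [Fintype σ] [Field K] [CharZero K]

theorem exists_navierMap_psum_two_smul_eq {b : K} {d : ℕ} (hb : b + 1 ≠ 0)
    (hbd : Fintype.card σ + 2 * d + b * (d + 1) ≠ 0) {f : σ → MvPolynomial σ K}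
    (hf : f ∈ homogeneousTuples σ K d) :
    ∃ v ∈ homogeneousTuples σ K d, navierMap b (psum σ K 2 • v) = f := by
  let T : (σ → MvPolynomial σ K) →ₗ[K] σ → MvPolynomial σ K :=
    navierMap b ∘ₗ DistribSMul.toLinearMap K _ (psum σ K 2)
  have hT (v : σ → MvPolynomial σ K) : T v = navierMap b (psum σ K 2 • v) := rfl
  have hmaps : ∀ v ∈ homogeneousTuples σ K d, T v ∈ homogeneousTuples σ K d := fun v hv => by
    rw [hT]
    exact navierMap_mem_homogeneousTuples b (psum_two_smul_mem_homogeneousTuples hv)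
  have hinj : Set.InjOn T (homogeneousTuples σ K d) := by
    rw [← LinearMap.disjoint_ker_iff_injOn, LinearMap.disjoint_ker]
    intro v hv
    rw [hT]
    exact eq_zero_of_navierMap_psum_two_smul_eq_zero hb hbd (mem_homogeneousTuples.mp hv)
  exact (LinearMap.injOn_iff_surjOn hmaps).mp hinj hf

theorem homogeneousTuples_le_navierSolutions_sup_sqNormMultiples {b : K} {k : ℕ}
    (hb : b + 1 ≠ 0)
    (hbk : ∀ d : ℕ, k = d + 2 → Fintype.card σ + 2 * d + b * (d + 1) ≠ 0) :
    homogeneousTuples σ K k ≤ navierSolutions b k ⊔ sqNormMultiples σ K k := by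
  match k with
  | 0 | 1 => exact (navierSolutions_eq_homogeneousTuples_of_lt_two b (by simp)).ge.trans le_sup_left
  | d + 2 =>
    intro u hu
    obtain ⟨v, hv, hNv⟩ :=
      exists_navierMap_psum_two_smul_eq hb (hbk d rfl) (navierMap_mem_homogeneousTuples b hu)
    refine Submodule.mem_sup.mpr ⟨u - psum σ K 2 • v, ⟨?_, ?_⟩, psum σ K 2 • v, ?_, ?_⟩
    · exact sub_mem hu (psum_two_smul_mem_homogeneousTuples hv)
    · exact (map_sub _ _ _).trans (sub_eq_zero.mpr hNv.symm)
    · exact Submodule.smul_mem_pointwise_smul _ _ _ hv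
    · exact sub_add_cancel _ _

theorem navier_decomposition_Ak_general {b : K} {k : ℕ} (hb : b + 1 ≠ 0)
    (hbk : ∀ d : ℕ, k = d + 2 → Fintype.card σ + 2 * d + b * (d + 1) ≠ 0)
    {u : σ → MvPolynomial σ K} (hu : u ∈ homogeneousTuples σ K k) :
    ∃! p : (σ → MvPolynomial σ K) × (σ → MvPolynomial σ K),
      p.1 ∈ navierSolutions b k ∧ p.2 ∈ sqNormMultiples σ K k ∧ u = p.1 + p.2 :=
  existsUnique_add_eq_of_disjoint_of_mem_sup (disjoint_navierSolutions_sqNormMultiples hb hbk)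
    (homogeneousTuples_le_navierSolutions_sup_sqNormMultiples hb hbk hu)

end Decomposition

theorem card_add_two_mul_add_mul_ne_zero {σ R : Type*} [Fintype σ] [Nonempty σ] [CommRing R]
    [LinearOrder R] [IsStrictOrderedRing R] {b : R} (hb : 0 < b + 1) (d : ℕ) :
    Fintype.card σ + 2 * d + b * (d + 1) ≠ 0 := by
  have hcard : (1 : R) ≤ Fintype.card σ := mod_cast Fintype.card_pos
  have hpos : 0 < (b + 1) * (d + 1) := by positivity
  linarith [d.cast_nonneg (α := R)]

section Real

variable {n : ℕ}

theorem mem_navierSolutions_iff_navier_eq_zero {b : ℝ} {k : ℕ}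
    {u : Fin n → MvPolynomial (Fin n) ℝ} :
    u ∈ navierSolutions b k ↔ (∀ j, (u j).IsHomogeneous k) ∧ navier b u = 0 := by
  have hnavier : navierMap b u = navier b u := by
    funext j
    rw [navierMap_apply, polyLaplacian_apply, polyDivergence_apply, navier, lap]
  rw [navierSolutions, Submodule.mem_inf, mem_homogeneousTuples, LinearMap.mem_ker, hnavier]

theorem mem_sqNormMultiples_iff_inQA {k : ℕ} {w : Fin n → MvPolynomial (Fin n) ℝ} :
    w ∈ sqNormMultiples (Fin n) ℝ k ↔ inQA k w := by
  match k with
  | 0 | 1 => simp [sqNormMultiples, inQA]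
  | d + 2 =>
    simp only [sqNormMultiples, inQA, Submodule.mem_smul_pointwise_iff_exists,
      mem_homogeneousTuples, eq_comm (a := w), if_pos (Nat.le_add_left 2 d), Nat.add_sub_cancel]
    rfl

end Real

/-- for every `k`, `𝓐̂ₖ = Ĥₖ ⊕ (x₁²+⋯+xₙ²)·𝓐̂_{k-2}`, i.e. every
`n`-tuple of homogeneous degree-`k` polynomials decomposes uniquely as the sum of a
homogeneous degree-`k` polynomial solution of the Navier equations and an element of
`(x₁²+⋯+xₙ²)·𝓐̂_{k-2}`. -/
theorem navier_decomposition_Ak (n : ℕ) (hn : 3 ≤ n) (b : ℝ) (hb : b ≠ 0)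
    (hb1 : 0 < b + 1) (k : ℕ) (u : Fin n → MvPolynomial (Fin n) ℝ)
    (hu : ∀ j, (u j).IsHomogeneous k) :
    ∃! p : (Fin n → MvPolynomial (Fin n) ℝ) × (Fin n → MvPolynomial (Fin n) ℝ),
      ((∀ j, (p.1 j).IsHomogeneous k) ∧ navier b p.1 = 0) ∧
        inQA k p.2 ∧ u = p.1 + p.2 := by
  have : Nonempty (Fin n) := ⟨⟨0, by omega⟩⟩
  simpa only [mem_navierSolutions_iff_navier_eq_zero, mem_sqNormMultiples_iff_inQA] using
    navier_decomposition_Ak_general hb1.ne' (fun d _ => card_add_two_mul_add_mul_ne_zero hb1 d)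
      (mem_homogeneousTuples.mpr hu)
end

section
/- For every integer k ≥ 2, the space Ĥₖ of homogeneous degree-k polynomial solutions of the Navier equations decomposes as the internal direct sum Ĥₖ = ψ(H_{k+1}) ⊕ Ĥ_{k,2} ⊕ φ(H_{k−1}) of ℝ-vector subspaces. -/
open MvPolynomial

/-- The gradient map `ψ(f) = (∂_{x₁}f,…,∂_{xₙ}f)`. -/
noncomputable def gradPsi {n : ℕ} (f : MvPolynomial (Fin n) ℝ) :
    Fin n → MvPolynomial (Fin n) ℝ :=
  fun j => pderiv j f

/-- `Ĥₖ` : homogeneous degree-`k` polynomial solutions of the Navier equations. -/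
def memHhat {n : ℕ} (b : ℝ) (k : ℕ) (u : Fin n → MvPolynomial (Fin n) ℝ) : Prop :=
  (∀ j, (u j).IsHomogeneous k) ∧ navier b u = 0

/-- Membership in `ψ(H_{k+1})`. -/
def memPsiH {n : ℕ} (k : ℕ) (v : Fin n → MvPolynomial (Fin n) ℝ) : Prop :=
  ∃ f : MvPolynomial (Fin n) ℝ, f.IsHomogeneous (k + 1) ∧ lap f = 0 ∧ v = gradPsi f

/-- `Ĥ_{k,2}` : tuples of degree-`k` harmonics `(f₁,…,fₙ)` with `∑ᵣ xᵣ fᵣ = 0`. -/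
def memHk2 {n : ℕ} (k : ℕ) (w : Fin n → MvPolynomial (Fin n) ℝ) : Prop :=
  (∀ r, (w r).IsHomogeneous k ∧ lap (w r) = 0) ∧ (∑ r : Fin n, X r * w r) = 0

/-- `φ = φ₁ + c·φ₂` with
`φ₁(f) = (k−1)[(∑ᵣ xᵣ²)·ψ(f) − (2k+n−4)·f·(x₁,…,xₙ)]`,
`φ₂(f) = (∑ᵣ xᵣ²)·ψ(f)` and
`c = (2k+n−2)(k+n−3)(k−1) / (2(b⁻¹(2k+n−4)+k−1))`. -/
noncomputable def phiMap {n : ℕ} (b : ℝ) (k : ℕ) (f : MvPolynomial (Fin n) ℝ) :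
    Fin n → MvPolynomial (Fin n) ℝ :=
  fun j =>
    ((k : ℝ) - 1) • ((∑ r : Fin n, X r ^ 2) * pderiv j f
        - (2 * (k : ℝ) + n - 4) • (f * X j))
    + ((2 * (k : ℝ) + n - 2) * ((k : ℝ) + n - 3) * ((k : ℝ) - 1) /
          (2 * (b⁻¹ * (2 * (k : ℝ) + n - 4) + (k : ℝ) - 1))) •
        ((∑ r : Fin n, X r ^ 2) * pderiv j f)

/-- Membership in `φ(H_{k-1})`. -/
def memPhiH {n : ℕ} (b : ℝ) (k : ℕ) (z : Fin n → MvPolynomial (Fin n) ℝ) : Prop :=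
  ∃ f : MvPolynomial (Fin n) ℝ, f.IsHomogeneous (k - 1) ∧ lap f = 0 ∧ z = phiMap b k f

/-!
Write `d = k - 1`. Since `div (N u) = (1 + b) Δ (div u)`, the divergence maps `Ĥₖ` to `H_d`. The map
`f ↦ (2 + b (d + n)) |x|² ∇f - 2 (2d + n - 2 + b d) f x`, a multiple of `φ`, takes `H_d` into `Ĥₖ`
and inverts the divergence up to the scalar `-2 (2d + n) (d + n - 2)`, which does not depend on `b`.
Hence `φ(H_d)` is a complement in `Ĥₖ` of the divergence-free solutions, and these are exactly the
divergence-free fields with harmonic components. On them the map `u ↦ x · u` takes values in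
`H_{k+1}` and has kernel `Ĥ_{k,2}`. By Euler's identity the gradient inverts it up to the scalar
`k + 1`, so `ψ(H_{k+1})` is a complement of `Ĥ_{k,2}`.
-/

section Complements

theorem eq_and_eq_of_add_eq_add_of_disjoint {R M : Type*} [Ring R] [AddCommGroup M] [Module R M]
    {P Q : Submodule R M} (hPQ : Disjoint P Q) {v v' w w' : M} (hv : v ∈ P) (hv' : v' ∈ P)
    (hw : w ∈ Q) (hw' : w' ∈ Q) (h : v + w = v' + w') : v = v' ∧ w = w' := by
  have hsub : v - v' = w' - w := by rw [sub_eq_sub_iff_add_eq_add, h, add_comm]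
  have hvv' : v = v' := sub_eq_zero.mp <|
    Submodule.disjoint_def.mp hPQ _ (P.sub_mem hv hv') (hsub ▸ Q.sub_mem hw' hw)
  subst hvv'
  exact ⟨rfl, add_left_cancel h⟩

theorem existsUnique_add_add_of_mem_sup_sup {R M : Type*} [Ring R] [AddCommGroup M] [Module R M]
    {P Q S : Submodule R M} (hPQ : Disjoint P Q) (hPQS : Disjoint (P ⊔ Q) S) {u : M}
    (hu : u ∈ P ⊔ Q ⊔ S) :
    ∃! p : M × M × M, p.1 ∈ P ∧ p.2.1 ∈ Q ∧ p.2.2 ∈ S ∧ u = p.1 + p.2.1 + p.2.2 := by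
  obtain ⟨_, hvw, z, hz, rfl⟩ := Submodule.mem_sup.mp hu
  obtain ⟨v, hv, w, hw, rfl⟩ := Submodule.mem_sup.mp hvw
  refine ⟨(v, w, z), ⟨hv, hw, hz, rfl⟩, ?_⟩
  rintro ⟨v', w', z'⟩ ⟨hv', hw', hz', h⟩
  obtain ⟨hvw_eq, rfl⟩ := eq_and_eq_of_add_eq_add_of_disjoint hPQS hvw
    (Submodule.add_mem_sup hv' hw') hz hz' h
  obtain ⟨rfl, rfl⟩ := eq_and_eq_of_add_eq_add_of_disjoint hPQ hv hv' hw hw' hvw_eq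
  rfl

variable {K M N : Type*} [DivisionRing K] [AddCommGroup M] [Module K M] [AddCommGroup N]
  [Module K N] {T : M →ₗ[K] N} {S : N →ₗ[K] M} {A : Submodule K M} {B : Submodule K N} {c : K}

theorem disjoint_ker_map_of_apply_eq_smul (hc : c ≠ 0) (hTS : ∀ f ∈ B, T (S f) = c • f) :
    Disjoint (LinearMap.ker T) (B.map S) := by
  rw [Submodule.disjoint_def]
  rintro _ hker ⟨f, hf, rfl⟩
  have hcf : c • f = 0 := by rw [← hTS f hf, LinearMap.mem_ker.mp hker]
  rw [(smul_eq_zero.mp hcf).resolve_left hc, map_zero]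

theorem inf_ker_sup_map_eq_of_apply_eq_smul (hc : c ≠ 0) (hTS : ∀ f ∈ B, T (S f) = c • f)
    (hT : A ≤ B.comap T) (hS : B.map S ≤ A) : A ⊓ LinearMap.ker T ⊔ B.map S = A := by
  refine le_antisymm (sup_le inf_le_left hS) fun u hu => ?_
  have hf : c⁻¹ • T u ∈ B := B.smul_mem _ (hT hu)
  have hSf : S (c⁻¹ • T u) ∈ B.map S := Submodule.mem_map_of_mem hf
  refine Submodule.mem_sup.mpr
    ⟨u - S (c⁻¹ • T u), ⟨A.sub_mem hu (hS hSf), ?_⟩, _, hSf, sub_add_cancel _ _⟩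
  rw [SetLike.mem_coe, LinearMap.mem_ker, map_sub, hTS _ hf, smul_inv_smul₀ hc, sub_self]

end Complements

/-- Polynomial vector fields on `R^σ`: one polynomial component for each variable. They form a
module both over `R` and over `MvPolynomial σ R`. -/
abbrev PolyVectorField (σ R : Type*) [CommSemiring R] := σ → MvPolynomial σ R

namespace PolyVectorField

section Calculus

variable {σ R : Type*} [CommSemiring R]

theorem pderiv_pderiv_comm (i j : σ) (f : MvPolynomial σ R) :
    pderiv i (pderiv j f) = pderiv j (pderiv i f) := by
  classical
  obtain rfl | hij := eq_or_ne i j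
  · rfl
  · ext m
    simp only [coeff_pderiv, Finsupp.add_apply, Finsupp.single_eq_of_ne hij,
      Finsupp.single_eq_of_ne hij.symm, add_zero, add_right_comm m]
    ring

/-- The gradient `f ↦ (∂ᵢ f)ᵢ`. -/
noncomputable def gradient : MvPolynomial σ R →ₗ[R] PolyVectorField σ R :=
  LinearMap.pi fun i => (pderiv (R := R) i).toLinearMap

@[simp]
theorem gradient_apply (f : MvPolynomial σ R) (i : σ) : gradient f i = pderiv i f := rfl

theorem gradient_mul (f g : MvPolynomial σ R) :
    gradient (f * g) = f • gradient g + g • gradient f := by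
  ext1 i
  simp [mul_comm g]

theorem gradient_X [DecidableEq σ] (j : σ) :
    gradient (X j : MvPolynomial σ R) = Pi.single j 1 := by
  ext1 i
  simp [pderiv_X, Pi.single_apply, eq_comm]

theorem gradient_eq_zero_of_isHomogeneous_zero {f : MvPolynomial σ R}
    (hf : f.IsHomogeneous 0) : gradient f = 0 := by
  rw [totalDegree_eq_zero_iff_eq_C.mp ((totalDegree_zero_iff_isHomogeneous σ).mpr hf)]
  ext1 i
  simp

variable [Fintype σ]

/-- The divergence `u ↦ ∑ᵢ ∂ᵢ uᵢ`. -/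
noncomputable def divergence : PolyVectorField σ R →ₗ[R] MvPolynomial σ R :=
  ∑ i, (pderiv (R := R) i).toLinearMap ∘ₗ LinearMap.proj i

theorem divergence_apply (u : PolyVectorField σ R) : divergence u = ∑ i, pderiv i (u i) := by
  simp [divergence]

/-- The Laplacian on polynomials, as the divergence of the gradient. -/
noncomputable def laplacian : MvPolynomial σ R →ₗ[R] MvPolynomial σ R :=
  divergence ∘ₗ gradient

theorem divergence_gradient (f : MvPolynomial σ R) : divergence (gradient f) = laplacian f := rfl

theorem laplacian_apply (f : MvPolynomial σ R) : laplacian f = ∑ i, pderiv i (pderiv i f) :=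
  divergence_apply _

/-- The Laplacian on vector fields, acting componentwise. -/
noncomputable def vectorLaplacian : PolyVectorField σ R →ₗ[R] PolyVectorField σ R :=
  laplacian.compLeft σ

@[simp]
theorem vectorLaplacian_apply (u : PolyVectorField σ R) (i : σ) :
    vectorLaplacian u i = laplacian (u i) := rfl

/-- The inner product `u ↦ ∑ᵢ xᵢ uᵢ` with the position field `x`, which is encoded as `X`. -/
noncomputable def radialComponent : PolyVectorField σ R →ₗ[R] MvPolynomial σ R :=
  ∑ i, LinearMap.mulLeft R (X i) ∘ₗ LinearMap.proj i

theorem radialComponent_apply (u : PolyVectorField σ R) : radialComponent u = ∑ i, X i * u i := by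
  simp [radialComponent]

theorem radialComponent_gradient {f : MvPolynomial σ R} {d : ℕ} (hf : f.IsHomogeneous d) :
    radialComponent (gradient f) = (d : R) • f := by
  rw [radialComponent_apply, Nat.cast_smul_eq_nsmul]
  exact hf.sum_X_mul_pderiv

theorem pderiv_radialComponent (i : σ) (u : PolyVectorField σ R) :
    pderiv i (radialComponent u) = u i + radialComponent (fun j => pderiv i (u j)) := by
  classical
  simp [radialComponent_apply, pderiv_X, Pi.single_apply, Finset.sum_add_distrib, add_comm]

theorem laplacian_pderiv (i : σ) (f : MvPolynomial σ R) :
    laplacian (pderiv i f) = pderiv i (laplacian f) := by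
  simp only [laplacian_apply, map_sum, pderiv_pderiv_comm _ i]

theorem divergence_vectorLaplacian (u : PolyVectorField σ R) :
    divergence (vectorLaplacian u) = laplacian (divergence u) := by
  simp only [divergence_apply, vectorLaplacian_apply, map_sum, laplacian_pderiv]

theorem divergence_smul (f : MvPolynomial σ R) (u : PolyVectorField σ R) :
    divergence (f • u) = gradient f ⬝ᵥ u + f * divergence u := by
  simp only [divergence_apply, dotProduct, gradient_apply, Pi.smul_apply, smul_eq_mul, pderiv_mul,
    Finset.sum_add_distrib, Finset.mul_sum]

theorem laplacian_mul (f g : MvPolynomial σ R) :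
    laplacian (f * g) = laplacian f * g + 2 * (gradient f ⬝ᵥ gradient g) + f * laplacian g := by
  rw [← divergence_gradient, gradient_mul, map_add, divergence_smul, divergence_smul,
    divergence_gradient, divergence_gradient, dotProduct_comm (gradient g)]
  ring

theorem laplacian_X_mul (i : σ) (f : MvPolynomial σ R) :
    laplacian (X i * f) = 2 * pderiv i f + X i * laplacian f := by
  classical
  have hX : laplacian (X i : MvPolynomial σ R) = 0 := by
    simp [laplacian_apply, pderiv_X, Pi.single_apply, apply_ite]
  rw [laplacian_mul, hX, gradient_X, single_one_dotProduct, zero_mul, zero_add,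
    gradient_apply]

theorem laplacian_radialComponent (u : PolyVectorField σ R) :
    laplacian (radialComponent u) = 2 * divergence u + radialComponent (vectorLaplacian u) := by
  simp only [radialComponent_apply, map_sum, laplacian_X_mul, Finset.sum_add_distrib,
    divergence_apply, vectorLaplacian_apply, Finset.mul_sum]

theorem divergence_X :
    divergence (X : PolyVectorField σ R) = (Fintype.card σ : MvPolynomial σ R) := by
  simp [divergence_apply]

theorem divergence_smul_X (f : MvPolynomial σ R) :
    divergence (f • (X : PolyVectorField σ R)) =
      radialComponent (gradient f) + (Fintype.card σ : R) • f := by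
  rw [divergence_smul, divergence_X, dotProduct_comm, radialComponent_apply,
    Nat.cast_smul_eq_nsmul, nsmul_eq_mul, mul_comm f]
  rfl

theorem vectorLaplacian_smul_X (f : MvPolynomial σ R) :
    vectorLaplacian (f • (X : PolyVectorField σ R)) = (2 : R) • gradient f + laplacian f • X := by
  ext1 i
  simp only [vectorLaplacian_apply, Pi.smul_apply, Pi.add_apply, smul_eq_mul, gradient_apply,
    mul_comm _ (X i), laplacian_X_mul, two_smul, two_mul]

/-- The squared norm `∑ᵢ xᵢ²` of the position field. -/
noncomputable def normSq : MvPolynomial σ R := ∑ i, X i ^ 2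

theorem normSq_isHomogeneous : (normSq : MvPolynomial σ R).IsHomogeneous 2 :=
  .sum _ _ _ fun i _ => isHomogeneous_X_pow i 2

theorem gradient_normSq : gradient (normSq : MvPolynomial σ R) = (2 : R) • X := by
  classical
  ext1 i
  simp [normSq, pderiv_X, Pi.single_apply, ofNat_smul_eq_nsmul]

theorem gradient_normSq_dotProduct (u : PolyVectorField σ R) :
    gradient (normSq : MvPolynomial σ R) ⬝ᵥ u = (2 : R) • radialComponent u := by
  rw [gradient_normSq, smul_dotProduct, radialComponent_apply]
  rfl

theorem divergence_normSq_smul_gradient (f : MvPolynomial σ R) :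
    divergence ((normSq : MvPolynomial σ R) • gradient f) =
      (2 : R) • radialComponent (gradient f) + normSq * laplacian f := by
  rw [divergence_smul, gradient_normSq_dotProduct, divergence_gradient]

theorem laplacian_normSq :
    laplacian (normSq : MvPolynomial σ R) = 2 * (Fintype.card σ : MvPolynomial σ R) := by
  rw [← divergence_gradient, gradient_normSq, map_smul, divergence_X, ofNat_smul_eq_nsmul,
    nsmul_eq_mul, Nat.cast_ofNat]

theorem laplacian_normSq_mul (f : MvPolynomial σ R) :
    laplacian (normSq * f) = (2 * (Fintype.card σ : R)) • f +
      (4 : R) • radialComponent (gradient f) + normSq * laplacian f := by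
  rw [laplacian_mul, laplacian_normSq, gradient_normSq_dotProduct]
  simp only [smul_eq_C_mul, map_mul, map_natCast, map_ofNat]
  ring

end Calculus

section NavierOperator

variable {σ R : Type*} [Fintype σ] [CommSemiring R]

/-- The Navier operator `u ↦ Δu + b ∇(div u)`. -/
noncomputable def navierOperator (b : R) : PolyVectorField σ R →ₗ[R] PolyVectorField σ R :=
  vectorLaplacian + b • gradient ∘ₗ divergence

theorem navierOperator_apply (b : R) (u : PolyVectorField σ R) :
    navierOperator b u = vectorLaplacian u + b • gradient (divergence u) := rfl

theorem divergence_navierOperator (b : R) (u : PolyVectorField σ R) :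
    divergence (navierOperator b u) = (1 + b) • laplacian (divergence u) := by
  rw [navierOperator_apply, map_add, map_smul, divergence_vectorLaplacian, divergence_gradient,
    add_smul, one_smul]

end NavierOperator

section Spaces

variable (σ : Type*) {R : Type*} [Fintype σ] [CommSemiring R]

/-- The space `Ĥₖ`: the solutions of the Navier equations whose components are
homogeneous of degree `k`. -/
noncomputable def navierSolutions (b : R) (k : ℕ) : Submodule R (PolyVectorField σ R) :=
  Submodule.pi Set.univ (fun _ => homogeneousSubmodule σ R k) ⊓ LinearMap.ker (navierOperator b)

variable (R)

/-- The space `Hₖ` of harmonic polynomials that are homogeneous of degree `k`. -/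
noncomputable def harmonic (k : ℕ) : Submodule R (MvPolynomial σ R) :=
  homogeneousSubmodule σ R k ⊓ LinearMap.ker laplacian

/-- The divergence-free fields with components in `Hₖ`. -/
noncomputable def solenoidalHarmonic (k : ℕ) : Submodule R (PolyVectorField σ R) :=
  Submodule.pi Set.univ (fun _ => harmonic σ R k) ⊓ LinearMap.ker divergence

/-- The fields with components in `Hₖ` that are orthogonal to the position field; this is the
space `Ĥ_{k,2}`. -/
noncomputable def tangentialHarmonic (k : ℕ) : Submodule R (PolyVectorField σ R) :=
  Submodule.pi Set.univ (fun _ => harmonic σ R k) ⊓ LinearMap.ker radialComponent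

variable {σ R} {b : R} {k : ℕ} {f : MvPolynomial σ R} {u : PolyVectorField σ R}

theorem mem_harmonic : f ∈ harmonic σ R k ↔ f.IsHomogeneous k ∧ laplacian f = 0 := Iff.rfl

theorem mem_navierSolutions :
    u ∈ navierSolutions σ b k ↔ (∀ i, (u i).IsHomogeneous k) ∧ navierOperator b u = 0 := by
  simp [navierSolutions]

theorem mem_solenoidalHarmonic :
    u ∈ solenoidalHarmonic σ R k ↔ (∀ i, u i ∈ harmonic σ R k) ∧ divergence u = 0 := by
  simp [solenoidalHarmonic]

theorem mem_tangentialHarmonic :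
    u ∈ tangentialHarmonic σ R k ↔ (∀ i, u i ∈ harmonic σ R k) ∧ radialComponent u = 0 := by
  simp [tangentialHarmonic]

theorem navierSolutions_inf_ker_divergence (b : R) (k : ℕ) :
    navierSolutions σ b k ⊓ LinearMap.ker divergence = solenoidalHarmonic σ R k := by
  ext u
  simp only [Submodule.mem_inf, LinearMap.mem_ker, mem_navierSolutions, mem_solenoidalHarmonic,
    mem_harmonic, forall_and]
  refine and_congr_left fun hdiv => and_congr_right fun _ => ?_
  simp [navierOperator_apply, hdiv, funext_iff]

theorem gradient_mem_solenoidalHarmonic (hf : f ∈ harmonic σ R (k + 1)) :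
    gradient f ∈ solenoidalHarmonic σ R k := by
  refine mem_solenoidalHarmonic.mpr ⟨fun i => ⟨hf.1.pderiv, ?_⟩, hf.2⟩
  rw [SetLike.mem_coe, LinearMap.mem_ker, gradient_apply, laplacian_pderiv, hf.2, map_zero]

theorem radialComponent_mem_harmonic (hu : u ∈ solenoidalHarmonic σ R k) :
    radialComponent u ∈ harmonic σ R (k + 1) := by
  obtain ⟨hharm, hdiv⟩ := mem_solenoidalHarmonic.mp hu
  have hlap : vectorLaplacian u = 0 := _root_.funext fun i => (hharm i).2
  refine mem_harmonic.mpr ⟨?_, ?_⟩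
  · rw [radialComponent_apply]
    exact .sum _ _ _ fun i _ => add_comm 1 k ▸ (isHomogeneous_X R i).mul (hharm i).1
  · rw [laplacian_radialComponent, hdiv, hlap, map_zero, mul_zero, add_zero]

end Spaces

section NavierLift

variable {σ R : Type*} [Fintype σ] [CommRing R] {d : ℕ} {f : MvPolynomial σ R}

theorem radialComponent_gradient_pderiv (hf : f.IsHomogeneous d) (i : σ) :
    radialComponent (gradient (pderiv i f)) = ((d : R) - 1) • pderiv i f := by
  have h := pderiv_radialComponent i (gradient f)
  rw [radialComponent_gradient hf, Derivation.map_smul] at h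
  rw [sub_smul, one_smul, h, gradient_apply, add_sub_cancel_left]
  simp only [gradient_apply, pderiv_pderiv_comm i]
  rfl

theorem vectorLaplacian_normSq_smul_gradient (hf : f ∈ harmonic σ R d) :
    vectorLaplacian ((normSq : MvPolynomial σ R) • gradient f) =
      (2 * (2 * d + Fintype.card σ - 2) : R) • gradient f := by
  ext1 i
  rw [vectorLaplacian_apply, Pi.smul_apply, smul_eq_mul, laplacian_normSq_mul, gradient_apply,
    radialComponent_gradient_pderiv hf.1, laplacian_pderiv, hf.2, map_zero, mul_zero, add_zero,
    smul_smul, ← add_smul, Pi.smul_apply, gradient_apply]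
  congr 1
  ring

/-- The polynomial multiple of the paper's map `φ` that is defined for every value of `b`; the
parameter `d` is the degree of the polynomials to which it is applied, so that `k = d + 1`. -/
noncomputable def navierLift (b : R) (d : ℕ) : MvPolynomial σ R →ₗ[R] PolyVectorField σ R where
  toFun f := (2 + b * (d + Fintype.card σ)) • (normSq : MvPolynomial σ R) • gradient f -
    (2 * (2 * d + Fintype.card σ - 2 + b * d)) • f • (X : PolyVectorField σ R)
  map_add' f g := by
    simp only [map_add, smul_add, add_smul]
    abel
  map_smul' c f := by
    simp only [LinearMap.map_smul, smul_sub, smul_assoc, smul_comm _ c, RingHom.id_apply]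

theorem navierLift_apply (b : R) (d : ℕ) (f : MvPolynomial σ R) :
    navierLift b d f = (2 + b * (d + Fintype.card σ)) • (normSq : MvPolynomial σ R) • gradient f -
      (2 * (2 * d + Fintype.card σ - 2 + b * d)) • f • (X : PolyVectorField σ R) := rfl

theorem divergence_navierLift (b : R) (hf : f ∈ harmonic σ R d) :
    divergence (navierLift b d f) =
      (-(2 * (2 * d + Fintype.card σ) * (d + Fintype.card σ - 2)) : R) • f := by
  rw [navierLift_apply, map_sub, LinearMap.map_smul, LinearMap.map_smul,
    divergence_normSq_smul_gradient,
    divergence_smul_X, radialComponent_gradient hf.1, hf.2, mul_zero]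
  module

theorem vectorLaplacian_navierLift (b : R) (hf : f ∈ harmonic σ R d) :
    vectorLaplacian (navierLift b d f) =
      (b * (2 * (2 * d + Fintype.card σ) * (d + Fintype.card σ - 2))) • gradient f := by
  rw [navierLift_apply, map_sub, LinearMap.map_smul, LinearMap.map_smul,
    vectorLaplacian_normSq_smul_gradient hf,
    vectorLaplacian_smul_X, hf.2, zero_smul, add_zero]
  module

theorem navierLift_isHomogeneous (b : R) (hf : f.IsHomogeneous d) (i : σ) :
    (navierLift b d f i).IsHomogeneous (d + 1) := by
  have hgrad : (normSq * gradient f i).IsHomogeneous (d + 1) := by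
    obtain _ | d := d
    · rw [gradient_eq_zero_of_isHomogeneous_zero hf, Pi.zero_apply, mul_zero]
      exact isHomogeneous_zero σ R 1
    · exact add_comm 2 d ▸ normSq_isHomogeneous.mul hf.pderiv
  exact (homogeneousSubmodule σ R (d + 1)).sub_mem (Submodule.smul_mem _ _ hgrad)
    (Submodule.smul_mem _ _ (hf.mul (isHomogeneous_X R i)))

theorem navierLift_mem_navierSolutions (b : R) (hf : f ∈ harmonic σ R d) :
    navierLift b d f ∈ navierSolutions σ b (d + 1) := by
  refine mem_navierSolutions.mpr ⟨navierLift_isHomogeneous b hf.1, ?_⟩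
  rw [navierOperator_apply, vectorLaplacian_navierLift b hf, divergence_navierLift b hf]
  simp only [map_smul]
  module

end NavierLift

section Decomposition

variable {σ K : Type*} [Fintype σ] [Field K] {b : K} {d : ℕ}

theorem divergence_mem_harmonic (hb : 1 + b ≠ 0) {u : PolyVectorField σ K}
    (hu : u ∈ navierSolutions σ b (d + 1)) :
    divergence u ∈ harmonic σ K d := by
  obtain ⟨hhom, hnavier⟩ := mem_navierSolutions.mp hu
  refine mem_harmonic.mpr ⟨?_, ?_⟩
  · rw [divergence_apply]
    exact .sum _ _ _ fun i _ => (hhom i).pderiv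
  · have h : (1 + b) • laplacian (divergence u) = 0 := by
      rw [← divergence_navierOperator, hnavier, map_zero]
    exact (smul_eq_zero.mp h).resolve_left hb

variable [CharZero K]

theorem solenoidalHarmonic_inf_ker_radialComponent (k : ℕ) :
    solenoidalHarmonic σ K k ⊓ LinearMap.ker radialComponent = tangentialHarmonic σ K k := by
  ext u
  simp only [Submodule.mem_inf, LinearMap.mem_ker, mem_solenoidalHarmonic, mem_tangentialHarmonic]
  refine ⟨fun h => ⟨h.1.1, h.2⟩, fun h => ⟨⟨h.1, ?_⟩, h.2⟩⟩
  have hlap : vectorLaplacian u = 0 := _root_.funext fun i => (h.1 i).2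
  simpa [h.2, hlap] using laplacian_radialComponent u

theorem disjoint_tangentialHarmonic_map_gradient (k : ℕ) :
    Disjoint (tangentialHarmonic σ K k) ((harmonic σ K (k + 1)).map gradient) := by
  rw [← solenoidalHarmonic_inf_ker_radialComponent]
  exact (disjoint_ker_map_of_apply_eq_smul (Nat.cast_ne_zero.mpr k.succ_ne_zero)
    fun f (hf : f ∈ harmonic σ K (k + 1)) => radialComponent_gradient hf.1).mono_left inf_le_right

theorem tangentialHarmonic_sup_map_gradient (k : ℕ) :
    tangentialHarmonic σ K k ⊔ (harmonic σ K (k + 1)).map gradient =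
      solenoidalHarmonic σ K k := by
  rw [← solenoidalHarmonic_inf_ker_radialComponent]
  exact inf_ker_sup_map_eq_of_apply_eq_smul (Nat.cast_ne_zero.mpr k.succ_ne_zero)
    (fun f hf => radialComponent_gradient hf.1) (fun u => radialComponent_mem_harmonic)
    (Submodule.map_le_iff_le_comap.mpr fun f => gradient_mem_solenoidalHarmonic)

theorem divergence_navierLift_coeff_ne_zero (hσ : 2 < d + Fintype.card σ) :
    (-(2 * (2 * d + Fintype.card σ) * (d + Fintype.card σ - 2)) : K) ≠ 0 := by
  have hsum : (2 * d + Fintype.card σ : K) ≠ 0 := by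
    exact_mod_cast (by lia : 2 * d + Fintype.card σ ≠ 0)
  have hsub : (d + Fintype.card σ - 2 : K) ≠ 0 := by
    rw [sub_ne_zero]
    exact_mod_cast hσ.ne'
  exact neg_ne_zero.mpr (mul_ne_zero (mul_ne_zero two_ne_zero hsum) hsub)

theorem disjoint_solenoidalHarmonic_map_navierLift (hσ : 2 < d + Fintype.card σ) (b : K) :
    Disjoint (solenoidalHarmonic σ K (d + 1)) ((harmonic σ K d).map (navierLift b d)) :=
  (disjoint_ker_map_of_apply_eq_smul (divergence_navierLift_coeff_ne_zero hσ)
    fun _ hf => divergence_navierLift b hf).mono_left inf_le_right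

theorem solenoidalHarmonic_sup_map_navierLift (hσ : 2 < d + Fintype.card σ) (hb : 1 + b ≠ 0) :
    solenoidalHarmonic σ K (d + 1) ⊔ (harmonic σ K d).map (navierLift b d) =
      navierSolutions σ b (d + 1) := by
  rw [← navierSolutions_inf_ker_divergence b]
  exact inf_ker_sup_map_eq_of_apply_eq_smul (divergence_navierLift_coeff_ne_zero hσ)
    (fun f hf => divergence_navierLift b hf) (fun u => divergence_mem_harmonic hb)
    (Submodule.map_le_iff_le_comap.mpr fun f => navierLift_mem_navierSolutions b)

end Decomposition

end PolyVectorField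

open PolyVectorField

theorem navier_Hhat_decomposition_general {σ K : Type*} [Fintype σ] [Field K] [CharZero K]
    {b : K} (hb : 1 + b ≠ 0) {d : ℕ} (hσ : 2 < d + Fintype.card σ) :
    (∀ v ∈ (harmonic σ K (d + 2)).map gradient, v ∈ navierSolutions σ b (d + 1)) ∧
    (∀ w ∈ tangentialHarmonic σ K (d + 1), w ∈ navierSolutions σ b (d + 1)) ∧
    (∀ z ∈ (harmonic σ K d).map (navierLift b d), z ∈ navierSolutions σ b (d + 1)) ∧
    (∀ u ∈ navierSolutions σ b (d + 1),
      ∃! p : PolyVectorField σ K × PolyVectorField σ K × PolyVectorField σ K,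
        p.1 ∈ (harmonic σ K (d + 2)).map gradient ∧ p.2.1 ∈ tangentialHarmonic σ K (d + 1) ∧
          p.2.2 ∈ (harmonic σ K d).map (navierLift b d) ∧ u = p.1 + p.2.1 + p.2.2) := by
  have hsolenoidal : (harmonic σ K (d + 2)).map gradient ⊔ tangentialHarmonic σ K (d + 1) =
      solenoidalHarmonic σ K (d + 1) := by rw [sup_comm, tangentialHarmonic_sup_map_gradient]
  have hdisjoint := disjoint_solenoidalHarmonic_map_navierLift hσ b
  have hnavier := solenoidalHarmonic_sup_map_navierLift hσ hb
  rw [← hsolenoidal] at hdisjoint hnavier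
  rw [← hnavier]
  exact ⟨fun _ hv => Submodule.mem_sup_left (Submodule.mem_sup_left hv),
    fun _ hw => Submodule.mem_sup_left (Submodule.mem_sup_right hw),
    fun _ hz => Submodule.mem_sup_right hz,
    fun _ => existsUnique_add_add_of_mem_sup_sup
      (disjoint_tangentialHarmonic_map_gradient (d + 1)).symm hdisjoint⟩

section RealCoordinates

variable {n : ℕ}

theorem lap_eq_laplacian (f : MvPolynomial (Fin n) ℝ) : lap f = laplacian f :=
  (laplacian_apply f).symm

theorem navier_eq_navierOperator (b : ℝ) (u : PolyVectorField (Fin n) ℝ) :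
    navier b u = navierOperator b u := by
  ext1 j
  rw [navier, lap_eq_laplacian, ← divergence_apply]
  rfl

theorem memHhat_iff {b : ℝ} {k : ℕ} {u : PolyVectorField (Fin n) ℝ} :
    memHhat b k u ↔ u ∈ navierSolutions (Fin n) b k := by
  rw [memHhat, navier_eq_navierOperator, mem_navierSolutions]

theorem memPsiH_iff {k : ℕ} {v : PolyVectorField (Fin n) ℝ} :
    memPsiH k v ↔ v ∈ (harmonic (Fin n) ℝ (k + 1)).map gradient := by
  simp only [memPsiH, lap_eq_laplacian, Submodule.mem_map, mem_harmonic, and_assoc, eq_comm]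
  rfl

theorem memHk2_iff {k : ℕ} {w : PolyVectorField (Fin n) ℝ} :
    memHk2 k w ↔ w ∈ tangentialHarmonic (Fin n) ℝ k := by
  simp only [memHk2, lap_eq_laplacian, ← radialComponent_apply, mem_tangentialHarmonic,
    mem_harmonic]

theorem phiMap_succ_eq_smul_navierLift {b : ℝ} (hb : b ≠ 0) {d : ℕ}
    (hbd : (2 * d + n - 2 + b * d : ℝ) ≠ 0) (f : MvPolynomial (Fin n) ℝ) :
    phiMap b (d + 1) f =
      (d * (2 * d + n - 2) / (2 * (2 * d + n - 2 + b * d)) : ℝ) • navierLift b d f := by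
  have hden : 2 * (b⁻¹ * (2 * d + n - 2) + d) = 2 * (2 * d + n - 2 + b * d) / b := by
    field_simp
  have hgradient : (d * (2 * d + n - 2) / (2 * (2 * d + n - 2 + b * d)) * (2 + b * (d + n)) : ℝ) =
      d + (2 * d + n) * (d + n - 2) * d / (2 * (b⁻¹ * (2 * d + n - 2) + d)) := by
    rw [hden]
    generalize hD : (2 * d + n - 2 + b * d : ℝ) = D at hbd
    field_simp
    rw [← hD]
    ring
  have hposition : (d * (2 * d + n - 2) / (2 * (2 * d + n - 2 + b * d)) *
      (2 * (2 * d + n - 2 + b * d)) : ℝ) = d * (2 * d + n - 2) :=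
    div_mul_cancel₀ _ (mul_ne_zero two_ne_zero hbd)
  rw [navierLift_apply, Fintype.card_fin, smul_sub, smul_smul, smul_smul, hgradient, hposition]
  ext1 j
  simp only [phiMap, Pi.smul_apply, Pi.sub_apply, smul_eq_mul, gradient_apply, normSq,
    Nat.cast_succ]
  match_scalars <;> ring

theorem memPhiH_succ_iff (hn : 2 ≤ n) {b : ℝ} (hb : b ≠ 0) (hb1 : 0 < b + 1) {d : ℕ}
    (hd : 0 < d) {z : PolyVectorField (Fin n) ℝ} :
    memPhiH b (d + 1) z ↔ z ∈ (harmonic (Fin n) ℝ d).map (navierLift b d) := by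
  have hn' : (2 : ℝ) ≤ n := by exact_mod_cast hn
  have hd' : (0 : ℝ) < d := by exact_mod_cast hd
  have hnum : (0 : ℝ) < 2 * d + n - 2 := by linarith
  have hden : (0 : ℝ) < 2 * d + n - 2 + b * d := by nlinarith
  have hscale : (d * (2 * d + n - 2) / (2 * (2 * d + n - 2 + b * d)) : ℝ) ≠ 0 := by positivity
  rw [← Submodule.map_smul _ _ _ hscale]
  simp only [memPhiH, lap_eq_laplacian, phiMap_succ_eq_smul_navierLift hb hden.ne',
    Submodule.mem_map, mem_harmonic, and_assoc, LinearMap.smul_apply, eq_comm,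
    add_tsub_cancel_right]

end RealCoordinates

/-- for `k ≥ 2`, `Ĥₖ = ψ(H_{k+1}) ⊕ Ĥ_{k,2} ⊕ φ(H_{k−1})` as an internal
direct sum of ℝ-subspaces: each summand lies in `Ĥₖ` and every element of `Ĥₖ` is
uniquely the sum of elements of the three summands. -/
theorem navier_Hhat_decomposition (n : ℕ) (hn : 3 ≤ n) (b : ℝ) (hb : b ≠ 0)
    (hb1 : 0 < b + 1) (k : ℕ) (hk : 2 ≤ k) :
    (∀ v : Fin n → MvPolynomial (Fin n) ℝ, memPsiH k v → memHhat b k v) ∧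
    (∀ w : Fin n → MvPolynomial (Fin n) ℝ, memHk2 k w → memHhat b k w) ∧
    (∀ z : Fin n → MvPolynomial (Fin n) ℝ, memPhiH b k z → memHhat b k z) ∧
    (∀ u : Fin n → MvPolynomial (Fin n) ℝ, memHhat b k u →
      ∃! p : (Fin n → MvPolynomial (Fin n) ℝ) × (Fin n → MvPolynomial (Fin n) ℝ) ×
          (Fin n → MvPolynomial (Fin n) ℝ),
        memPsiH k p.1 ∧ memHk2 k p.2.1 ∧ memPhiH b k p.2.2 ∧
          u = p.1 + p.2.1 + p.2.2) := by
  obtain ⟨d, rfl⟩ : ∃ d, k = d + 1 := ⟨k - 1, by lia⟩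
  simpa only [memHhat_iff, memPsiH_iff, memHk2_iff,
    memPhiH_succ_iff (by lia : 2 ≤ n) hb hb1 (by lia : 0 < d)] using
    navier_Hhat_decomposition_general (σ := Fin n) (by linarith : 1 + b ≠ 0)
      (by rw [Fintype.card_fin]; lia : 2 < d + Fintype.card (Fin n))
end

section
/- For every integer k ≥ 2, the maps φ₁ and φ₂ are injective on H_{k−1} and intertwine the o(n,ℝ)-actions: for every homogeneous polynomial h of degree k−1 and all 1 ≤ r < s ≤ n, φᵢ((x_r∂_{x_s} − x_s∂_{x_r})(h)) = L_{r,s}(φᵢ(h)) for i = 1,2, where L_{r,s}(u) = (x_r∂_{x_s} − x_s∂_{x_r})(u) + u_s ς_r − u_r ς_s. -/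
open MvPolynomial

/-- `φ₁(f) = (k−1)[(∑ᵣ xᵣ²)·ψ(f) − (2k+n−4)·f·(x₁,…,xₙ)]` where `ψ` is the gradient. -/
noncomputable def phi1 {n : ℕ} (k : ℕ) (f : MvPolynomial (Fin n) ℝ) :
    Fin n → MvPolynomial (Fin n) ℝ :=
  fun j =>
    ((k : ℝ) - 1) • ((∑ r : Fin n, X r ^ 2) * pderiv j f
      - (2 * (k : ℝ) + n - 4) • (f * X j))

/-- `φ₂(f) = (∑ᵣ xᵣ²)·ψ(f)` where `ψ` is the gradient map. -/
noncomputable def phi2 {n : ℕ} (f : MvPolynomial (Fin n) ℝ) :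
    Fin n → MvPolynomial (Fin n) ℝ :=
  fun j => (∑ r : Fin n, X r ^ 2) * pderiv j f

/-- The `o(n,ℝ)`-action on tuples:
`L_{r,s}(u) = (x_r∂_{x_s} − x_s∂_{x_r})(u) + u_s ς_r − u_r ς_s`. -/
noncomputable def Lop {n : ℕ} (r s : Fin n) (u : Fin n → MvPolynomial (Fin n) ℝ) :
    Fin n → MvPolynomial (Fin n) ℝ :=
  fun j => (X r * pderiv s (u j) - X s * pderiv r (u j))
    + (if j = r then u s else 0) - (if j = s then u r else 0)

/-!
Write `Q = ∑ᵣ xᵣ²`, `x = (x₁, …, xₙ)` and `ψ` for the gradient, so that `φ₂ f = Q ψ f` and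
`φ₁ f = (k - 1) (Q ψ f - (2k + n - 4) f x)`.

*Injectivity.* By Euler's identity `x · ψ f = d f` for `f` homogeneous of degree `d`, and
`x · x = Q`. Hence `x · φᵢ f` is a scalar multiple of `Q f`, with scalars
`(k - 1) (d - (2k + n - 4))` and `d`, and `Q` can be cancelled when the scalar is nonzero.

*Equivariance.* `L_{r,s}` satisfies the Leibniz rule over the derivation `x_r ∂_s - x_s ∂_r`. It
remains to see that this derivation kills `Q`, that `L_{r,s}` kills `x`, and that the gradient
intertwines the two.
-/

open scoped Matrix

section Gradient

variable {σ R : Type*} [CommSemiring R]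

theorem pderiv_comm (i j : σ) (f : MvPolynomial σ R) :
    pderiv i (pderiv j f) = pderiv j (pderiv i f) := by
  rcases eq_or_ne i j with rfl | hij
  · rfl
  · ext m
    simp [coeff_pderiv, hij, hij.symm, add_right_comm, mul_right_comm]

/-- The gradient map, written `ψ` in the definition of `φ₁` and `φ₂`. -/
noncomputable def polyGradient (f : MvPolynomial σ R) : σ → MvPolynomial σ R :=
  fun j => pderiv j f

variable [Fintype σ]

theorem X_dotProduct_X : (X : σ → MvPolynomial σ R) ⬝ᵥ X = psum σ R 2 := by
  simp only [dotProduct, psum, sq]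

theorem X_dotProduct_polyGradient {d : ℕ} {f : MvPolynomial σ R} (hf : f.IsHomogeneous d) :
    X ⬝ᵥ polyGradient f = d • f :=
  hf.sum_X_mul_pderiv

theorem pderiv_psum (j : σ) (m : ℕ) :
    pderiv j (psum σ R m) = (m : MvPolynomial σ R) * X j ^ (m - 1) := by
  classical
  simp [psum, Derivation.leibniz_pow, pderiv_X, Pi.single_apply]

theorem psum_ne_zero [Nontrivial R] [Nonempty σ] {m : ℕ} (hm : m ≠ 0) : psum σ R m ≠ 0 := by
  classical
  obtain ⟨i⟩ := ‹Nonempty σ›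
  have eval_single : eval (Pi.single i 1) (psum σ R m) = 1 := by
    simp [psum, Pi.single_apply, ite_pow, hm]
  intro psum_eq_zero
  simp [psum_eq_zero] at eval_single

end Gradient

section Rotation

variable {σ R : Type*} [CommRing R]

/-- The infinitesimal rotation `x_r ∂_s - x_s ∂_r` in the plane of the coordinates `r` and `s`,
through which `o(n)` acts on polynomials. -/
noncomputable def rotationDeriv (r s : σ) : Derivation R (MvPolynomial σ R) (MvPolynomial σ R) :=
  (X r : MvPolynomial σ R) • pderiv s - (X s : MvPolynomial σ R) • pderiv r

theorem rotationDeriv_apply (r s : σ) (f : MvPolynomial σ R) :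
    rotationDeriv r s f = X r * pderiv s f - X s * pderiv r f :=
  rfl

theorem rotationDeriv_X [DecidableEq σ] (r s j : σ) :
    rotationDeriv r s (X j : MvPolynomial σ R) =
      (if j = s then X r else 0) - (if j = r then X s else 0) := by
  simp [rotationDeriv_apply, pderiv_X, Pi.single_apply]

theorem rotationDeriv_psum_two [Fintype σ] (r s : σ) : rotationDeriv r s (psum σ R 2) = 0 := by
  simp only [rotationDeriv_apply, pderiv_psum]
  ring

theorem pderiv_rotationDeriv [DecidableEq σ] (r s j : σ) (f : MvPolynomial σ R) :
    pderiv j (rotationDeriv r s f) = rotationDeriv r s (pderiv j f) +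
      (if j = r then pderiv s f else 0) - (if j = s then pderiv r f else 0) := by
  simp only [rotationDeriv_apply, map_sub, pderiv_mul, pderiv_X, Pi.single_apply,
    pderiv_comm j, eq_comm (b := j), ite_mul, one_mul, zero_mul]
  ring

end Rotation

section Equivariance

variable {n : ℕ} (r s : Fin n)

theorem Lop_sub (u v : Fin n → MvPolynomial (Fin n) ℝ) :
    Lop r s (u - v) = Lop r s u - Lop r s v := by
  funext j
  simp only [Lop, Pi.sub_apply, map_sub]
  split_ifs <;> ring

theorem Lop_const_smul (c : ℝ) (u : Fin n → MvPolynomial (Fin n) ℝ) :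
    Lop r s (c • u) = c • Lop r s u := by
  funext j
  simp only [Lop, Pi.smul_apply, Derivation.map_smul, mul_smul_comm, smul_add, smul_sub, smul_ite,
    smul_zero]

theorem Lop_smul (f : MvPolynomial (Fin n) ℝ) (u : Fin n → MvPolynomial (Fin n) ℝ) :
    Lop r s (f • u) = rotationDeriv r s f • u + f • Lop r s u := by
  funext j
  simp only [Lop, rotationDeriv_apply, Pi.add_apply, Pi.smul_apply, smul_eq_mul, pderiv_mul]
  split_ifs <;> ring

theorem Lop_X : Lop r s (X : Fin n → MvPolynomial (Fin n) ℝ) = 0 := by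
  funext j
  simp only [Lop, ← rotationDeriv_apply, rotationDeriv_X, Pi.zero_apply]
  ring

theorem Lop_polyGradient (f : MvPolynomial (Fin n) ℝ) :
    Lop r s (polyGradient f) = polyGradient (rotationDeriv r s f) :=
  funext fun j => (pderiv_rotationDeriv r s j f).symm

theorem phi2_eq_smul_polyGradient (f : MvPolynomial (Fin n) ℝ) :
    phi2 f = psum (Fin n) ℝ 2 • polyGradient f :=
  rfl

theorem phi1_eq_smul_phi2_sub (k : ℕ) (f : MvPolynomial (Fin n) ℝ) :
    phi1 k f = ((k : ℝ) - 1) • (phi2 f - (2 * (k : ℝ) + n - 4) • f • X) :=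
  rfl

theorem phi2_rotationDeriv (f : MvPolynomial (Fin n) ℝ) :
    phi2 (rotationDeriv r s f) = Lop r s (phi2 f) := by
  rw [phi2_eq_smul_polyGradient, phi2_eq_smul_polyGradient, Lop_smul,
    rotationDeriv_psum_two, zero_smul, zero_add, Lop_polyGradient]

theorem phi1_rotationDeriv (k : ℕ) (f : MvPolynomial (Fin n) ℝ) :
    phi1 k (rotationDeriv r s f) = Lop r s (phi1 k f) := by
  have Lop_smul_X : Lop r s (f • X) = rotationDeriv r s f • X := by
    rw [Lop_smul, Lop_X, smul_zero, add_zero]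
  rw [phi1_eq_smul_phi2_sub, phi1_eq_smul_phi2_sub, Lop_const_smul, Lop_sub, Lop_const_smul,
    Lop_smul_X, phi2_rotationDeriv]

end Equivariance

section Injectivity

theorem smul_psum_mul_injective {σ R : Type*} [Fintype σ] [Nonempty σ] [CommRing R] [IsDomain R]
    {m : ℕ} (hm : m ≠ 0) {c : R} (hc : c ≠ 0) :
    Function.Injective fun f => c • (psum σ R m * f) :=
  (smul_right_injective _ hc).comp (mul_right_injective₀ (psum_ne_zero hm))

variable {n d : ℕ}

theorem X_dotProduct_phi2 {f : MvPolynomial (Fin n) ℝ} (hf : f.IsHomogeneous d) :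
    X ⬝ᵥ phi2 f = (d : ℝ) • (psum (Fin n) ℝ 2 * f) := by
  rw [phi2_eq_smul_polyGradient, dotProduct_smul, X_dotProduct_polyGradient hf, smul_eq_mul,
    mul_smul_comm, Nat.cast_smul_eq_nsmul]

theorem X_dotProduct_phi1 (k : ℕ) {f : MvPolynomial (Fin n) ℝ} (hf : f.IsHomogeneous d) :
    X ⬝ᵥ phi1 k f =
      (((k : ℝ) - 1) * (d - (2 * k + n - 4))) • (psum (Fin n) ℝ 2 * f) := by
  rw [phi1_eq_smul_phi2_sub, dotProduct_smul, dotProduct_sub, X_dotProduct_phi2 hf,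
    dotProduct_smul, dotProduct_smul, X_dotProduct_X, smul_eq_mul, mul_comm f, ← sub_smul,
    smul_smul]

variable [NeZero n]

theorem phi2_injOn (hd : d ≠ 0) :
    Set.InjOn phi2 {f : MvPolynomial (Fin n) ℝ | f.IsHomogeneous d} := by
  intro f hf g hg phi2_eq
  apply smul_psum_mul_injective two_ne_zero (Nat.cast_ne_zero (R := ℝ).mpr hd)
  simp only [← X_dotProduct_phi2 hf, ← X_dotProduct_phi2 hg, phi2_eq]

theorem phi1_injOn {k : ℕ} (hk : k ≠ 1) (hd : d + 4 ≠ 2 * k + n) :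
    Set.InjOn (phi1 k) {f : MvPolynomial (Fin n) ℝ | f.IsHomogeneous d} := by
  intro f hf g hg phi1_eq
  have factor_ne_zero : ((k : ℝ) - 1) * (d - (2 * k + n - 4)) ≠ 0 := by
    refine mul_ne_zero (sub_ne_zero.mpr (mod_cast hk)) fun h => hd ?_
    have : (d : ℝ) + 4 = 2 * k + n := by linarith
    exact_mod_cast this
  apply smul_psum_mul_injective two_ne_zero factor_ne_zero
  simp only [← X_dotProduct_phi1 k hf, ← X_dotProduct_phi1 k hg, phi1_eq]

end Injectivity

theorem phi1_phi2_injective_equivariant_general (n : ℕ) [NeZero n] (k : ℕ) (hk : 2 ≤ k)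
    (hnk : n + k ≠ 3) :
    Set.InjOn (phi1 k) {f : MvPolynomial (Fin n) ℝ | f.IsHomogeneous (k - 1)} ∧
    Set.InjOn phi2 {f : MvPolynomial (Fin n) ℝ | f.IsHomogeneous (k - 1)} ∧
    ∀ (f : MvPolynomial (Fin n) ℝ) (r s : Fin n),
      phi1 k (rotationDeriv r s f) = Lop r s (phi1 k f) ∧
        phi2 (rotationDeriv r s f) = Lop r s (phi2 f) :=
  ⟨phi1_injOn (by omega) (by omega), phi2_injOn (by omega),
    fun f r s => ⟨phi1_rotationDeriv r s k f, phi2_rotationDeriv r s f⟩⟩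

/-- for `k ≥ 2`, `φ₁` and `φ₂` are injective on `H_{k−1}` (the harmonic
homogeneous degree-`(k−1)` polynomials) and intertwine the `o(n,ℝ)`-actions on
homogeneous degree-`(k−1)` polynomials. -/
theorem phi1_phi2_injective_equivariant (n : ℕ) (hn : 3 ≤ n) (k : ℕ) (hk : 2 ≤ k) :
    (∀ h g : MvPolynomial (Fin n) ℝ,
      h.IsHomogeneous (k - 1) → lap h = 0 →
      g.IsHomogeneous (k - 1) → lap g = 0 →
      phi1 k h = phi1 k g → h = g) ∧
    (∀ h g : MvPolynomial (Fin n) ℝ,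
      h.IsHomogeneous (k - 1) → lap h = 0 →
      g.IsHomogeneous (k - 1) → lap g = 0 →
      phi2 h = phi2 g → h = g) ∧
    (∀ h : MvPolynomial (Fin n) ℝ, h.IsHomogeneous (k - 1) →
      ∀ r s : Fin n, r < s →
        phi1 k (X r * pderiv s h - X s * pderiv r h) = Lop r s (phi1 k h) ∧
        phi2 (X r * pderiv s h - X s * pderiv r h) = Lop r s (phi2 h)) := by
  have : NeZero n := ⟨by omega⟩
  obtain ⟨inj₁, inj₂, equivariant⟩ :=
    phi1_phi2_injective_equivariant_general n k hk (by omega)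
  exact ⟨fun _ _ hh _ hg _ => inj₁ hh hg, fun _ _ hh _ hg _ => inj₂ hh hg,
    fun h _ r s _ => equivariant h r s⟩
end

section
/- Assume n ≥ 3 and n ≠ 4. For every integer k ≥ 1, the subspace Ĥ_{k,2} of ℝ[x₁,…,xₙ]ⁿ is irreducible under the o(n,ℝ)-action: it is invariant under all the operators L_{r,s} (1 ≤ r < s ≤ n), and its only L_{r,s}-invariant ℝ-subspaces are {0} and Ĥ_{k,2} itself. -/
open MvPolynomial

/-- The set `Ĥ_{k,2}` of tuples of degree-`k` harmonics `(f₁,…,fₙ)` with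
`∑ᵣ xᵣ fᵣ = 0`. -/
def Hk2Set (n k : ℕ) : Set (Fin n → MvPolynomial (Fin n) ℝ) :=
  {w | (∀ r, (w r).IsHomogeneous k ∧ lap (w r) = 0) ∧ (∑ r : Fin n, X r * w r) = 0}

/-!
Coefficient functionals `L → K` turn invariant subspaces over `K` into invariant subspaces over a
larger field `L` without losing information, so one may pass to an algebraic closure.

There, fix a hyperbolic pair of isotropic vectors `e`, `f` and an orthonormal basis `t_a` of its
orthogonal complement. Each `e ∧ t_a` raises the eigenvalues of `e ∧ f` by one, so every nonzero
invariant subspace contains a nonzero tuple killed by all `e ∧ t_a`. Such a tuple has the form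
`x_e ^ k s - x_s x_e ^ (k - 1) e` for some `s` in the span of the `t_a`; as the standard
representation of `o(n - 2)` is irreducible for `n - 2 ≠ 2`, all these tuples lie in the subspace.
The operators are skew for the Fischer form, so the orthogonal complement of an invariant subspace
is invariant. Were both nonzero, the first would contain the above tuple for `e` and the second the
one for `f`, but these two pair to a positive integer.
-/

namespace OrthogonalTuples

open scoped Matrix

section Operators

variable {σ R : Type*} [Fintype σ] [CommRing R]

/-- The linear form `x_v = ∑ᵢ vᵢ xᵢ` attached to a vector `v`. -/
noncomputable def linForm : (σ → R) →ₗ[R] MvPolynomial σ R :=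
  Fintype.linearCombination R X

/-- The directional derivative `∂_v = ∑ᵢ vᵢ ∂ᵢ` along a vector `v`. -/
noncomputable def dirDeriv :
    (σ → R) →ₗ[R] Derivation R (MvPolynomial σ R) (MvPolynomial σ R) :=
  Fintype.linearCombination R pderiv

/-- The dot product `v · u = ∑ᵢ vᵢ uᵢ` of a vector `v` with a tuple of polynomials `u`. -/
noncomputable def contract : (σ → R) →ₗ[R] (σ → MvPolynomial σ R) →ₗ[R] MvPolynomial σ R :=
  Fintype.linearCombination R fun i => LinearMap.proj i

theorem linForm_single [DecidableEq σ] (i : σ) : linForm (Pi.single i (1 : R)) = X i := by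
  simp [linForm]

theorem dirDeriv_single [DecidableEq σ] (i : σ) : dirDeriv (Pi.single i (1 : R)) = pderiv i := by
  simp [dirDeriv]

theorem contract_single [DecidableEq σ] (i : σ) (u : σ → MvPolynomial σ R) :
    contract (Pi.single i (1 : R)) u = u i := by
  simp [contract]

theorem contract_apply (v : σ → R) (u : σ → MvPolynomial σ R) :
    contract v u = ∑ i, v i • u i := by
  simp [contract, Fintype.linearCombination_apply]

theorem contract_smul_const (v w : σ → R) (p : MvPolynomial σ R) :
    contract v (fun i => w i • p) = (v ⬝ᵥ w) • p := by
  simp [contract_apply, dotProduct, smul_smul, Finset.sum_smul]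

theorem dirDeriv_apply (v : σ → R) (p : MvPolynomial σ R) :
    dirDeriv v p = ∑ i, v i • pderiv i p := by
  rw [dirDeriv, Fintype.linearCombination_apply]
  exact (congrFun (map_sum Derivation.coeFnAddMonoidHom (fun i => v i • pderiv i) _) p).trans
    (Finset.sum_apply _ _ _)

theorem dirDeriv_X (v : σ → R) (i : σ) : dirDeriv v (X i) = C (v i) := by
  classical
  simp [dirDeriv_apply, pderiv_X, Pi.single_apply, smul_eq_C_mul]

theorem dirDeriv_linForm (v w : σ → R) : dirDeriv v (linForm w) = C (v ⬝ᵥ w) := by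
  simp only [linForm, Fintype.linearCombination_apply, map_sum, Derivation.map_smul, dirDeriv_X,
    dotProduct, mul_comm (v _)]
  simp only [smul_eq_C_mul, C_mul]

theorem dirDeriv_linForm_mul (v w : σ → R) (p : MvPolynomial σ R) :
    dirDeriv v (linForm w * p) = linForm w * dirDeriv v p + C (v ⬝ᵥ w) * p := by
  rw [Derivation.leibniz, dirDeriv_linForm, smul_eq_mul, smul_eq_mul, mul_comm p]

theorem dirDeriv_comm (v w : σ → R) (p : MvPolynomial σ R) :
    dirDeriv v (dirDeriv w p) = dirDeriv w (dirDeriv v p) := by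
  have h : ⁅dirDeriv v, dirDeriv w⁆ = 0 := derivation_ext fun i => by
    simp [Derivation.commutator_apply, dirDeriv_X]
  exact sub_eq_zero.1 (congrArg (fun D : Derivation R _ _ => D p) h)

theorem isHomogeneous_linForm (v : σ → R) : (linForm v).IsHomogeneous 1 :=
  (homogeneousSubmodule σ R 1).sum_smul_mem v fun i _ => isHomogeneous_X R i

theorem isHomogeneous_dirDeriv (v : σ → R) {k : ℕ} {p : MvPolynomial σ R}
    (hp : p.IsHomogeneous k) : (dirDeriv v p).IsHomogeneous (k - 1) := by
  rw [dirDeriv_apply]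
  exact (homogeneousSubmodule σ R (k - 1)).sum_smul_mem v fun i _ => hp.pderiv

theorem isHomogeneous_linForm_mul_dirDeriv (v w : σ → R) {k : ℕ} {p : MvPolynomial σ R}
    (hp : p.IsHomogeneous k) : (linForm v * dirDeriv w p).IsHomogeneous k := by
  rcases Nat.eq_zero_or_pos k with rfl | hk
  · rw [totalDegree_eq_zero_iff_eq_C.1 (Nat.le_zero.1 hp.totalDegree_le), ← algebraMap_eq,
      Derivation.map_algebraMap, mul_zero]
    exact isHomogeneous_zero _ _ _
  · simpa [Nat.add_sub_cancel' hk] using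
      (isHomogeneous_linForm v).mul (isHomogeneous_dirDeriv w hp)

/-- The infinitesimal rotation `x_v ∂_w - x_w ∂_v` in the plane of `v` and `w`. -/
noncomputable def angular (v w : σ → R) : Derivation R (MvPolynomial σ R) (MvPolynomial σ R) :=
  linForm v • dirDeriv w - linForm w • dirDeriv v

theorem angular_apply (v w : σ → R) (p : MvPolynomial σ R) :
    angular v w p = linForm v * dirDeriv w p - linForm w * dirDeriv v p := by
  simp [angular]

theorem angular_linForm (v w t : σ → R) :
    angular v w (linForm t) = (w ⬝ᵥ t) • linForm v - (v ⬝ᵥ t) • linForm w := by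
  simp only [angular_apply, dirDeriv_linForm, smul_eq_C_mul]
  ring

theorem lie_angular (v w v' w' : σ → R) :
    ⁅angular v w, angular v' w'⁆ = (w ⬝ᵥ v') • angular v w' - (w ⬝ᵥ w') • angular v v'
      - (v ⬝ᵥ v') • angular w w' + (v ⬝ᵥ w') • angular w v' := by
  refine derivation_ext fun i => ?_
  simp only [Derivation.commutator_apply, Derivation.add_apply, Derivation.sub_apply,
    Derivation.smul_apply, angular_apply, dirDeriv_X, map_sub, Derivation.leibniz, dirDeriv_linForm,
    smul_eq_mul, smul_eq_C_mul, ← algebraMap_eq, Derivation.map_algebraMap, dotProduct_comm v' w,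
    dotProduct_comm w' w, dotProduct_comm v' v, dotProduct_comm w' v]
  ring

/-- The action of `v ∧ w` on tuples `u` of polynomials, regarded as vector fields:
`(x_v ∂_w - x_w ∂_v) u + (w · u) v - (v · u) w`. On the coordinate vectors `ς_r`, `ς_s` it is the
operator `L_{r,s}`. -/
noncomputable def rot :
    (σ → R) →ₗ[R] (σ → R) →ₗ[R] Module.End R (σ → MvPolynomial σ R) :=
  LinearMap.mk₂ R
    (fun v w => LinearMap.pi fun j =>
      (angular v w).toLinearMap ∘ₗ LinearMap.proj j + v j • contract w - w j • contract v)
    (fun v v' w => by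
      ext1 u; funext j
      simp only [map_add, add_smul, smul_add, angular_apply, Pi.add_apply, LinearMap.add_apply,
        LinearMap.sub_apply, LinearMap.smul_apply, LinearMap.pi_apply, LinearMap.comp_apply,
        LinearMap.proj_apply, Derivation.coeFn_coe, Derivation.add_apply]
      ring)
    (fun c v w => by ext1 u; funext j; simp [angular_apply, mul_smul, smul_sub, smul_comm c])
    (fun v w w' => by
      ext1 u; funext j
      simp only [map_add, add_smul, smul_add, angular_apply, Pi.add_apply, LinearMap.add_apply,
        LinearMap.sub_apply, LinearMap.smul_apply, LinearMap.pi_apply, LinearMap.comp_apply,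
        LinearMap.proj_apply, Derivation.coeFn_coe, Derivation.add_apply]
      ring)
    (fun c v w => by ext1 u; funext j; simp [angular_apply, mul_smul, smul_sub, smul_comm c])

theorem rot_apply (v w : σ → R) (u : σ → MvPolynomial σ R) (j : σ) :
    rot v w u j = angular v w (u j) + v j • contract w u - w j • contract v u := rfl

theorem rot_self (v : σ → R) : rot v v = 0 := by
  ext1 u
  funext j
  simp [rot_apply, angular_apply]

theorem rot_swap (v w : σ → R) : rot w v = -rot v w := by
  ext1 u
  funext j
  simp only [rot_apply, angular_apply, LinearMap.neg_apply, Pi.neg_apply]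
  ring

theorem contract_rot (t v w : σ → R) (u : σ → MvPolynomial σ R) :
    contract t (rot v w u) =
      angular v w (contract t u) + (t ⬝ᵥ v) • contract w u - (t ⬝ᵥ w) • contract v u := by
  simp only [contract_apply t, rot_apply, smul_add, smul_sub, Finset.sum_add_distrib,
    Finset.sum_sub_distrib, map_sum, Derivation.map_smul, dotProduct, Finset.sum_smul, smul_smul]

theorem angular_contract_of_rot_eq_zero {v w : σ → R} {u : σ → MvPolynomial σ R}
    (h : rot v w u = 0) (t : σ → R) :
    angular v w (contract t u) = (t ⬝ᵥ w) • contract v u - (t ⬝ᵥ v) • contract w u := by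
  have ht := congrArg (contract t) h
  rw [contract_rot, map_zero] at ht
  linear_combination ht

theorem lie_rot (v w v' w' : σ → R) :
    ⁅rot v w, rot v' w'⁆ = (w ⬝ᵥ v') • rot v w' - (w ⬝ᵥ w') • rot v v'
      - (v ⬝ᵥ v') • rot w w' + (v ⬝ᵥ w') • rot w v' := by
  ext1 u
  funext j
  have h := congrArg (fun D : Derivation R _ _ => D (u j)) (lie_angular v w v' w')
  simp only [Derivation.commutator_apply, Derivation.add_apply, Derivation.sub_apply,
    Derivation.smul_apply] at h
  simp only [LieRing.of_associative_ring_bracket, LinearMap.sub_apply, LinearMap.add_apply,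
    LinearMap.smul_apply, Module.End.mul_apply, Pi.sub_apply, Pi.add_apply, Pi.smul_apply,
    rot_apply, contract_rot, map_add, map_sub, Derivation.map_smul, smul_add, smul_sub,
    dotProduct_comm v' w, dotProduct_comm w' w, dotProduct_comm v' v, dotProduct_comm w' v]
  simp only [smul_eq_C_mul] at h ⊢
  linear_combination h

/-- The Laplacian `∑ᵣ ∂ᵣ²`. -/
noncomputable def laplacian : Module.End R (MvPolynomial σ R) :=
  ∑ r, (pderiv r).toLinearMap ∘ₗ (pderiv r).toLinearMap

theorem laplacian_apply (p : MvPolynomial σ R) : laplacian p = ∑ r, pderiv r (pderiv r p) := by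
  simp [laplacian]

theorem laplacian_X_mul (r : σ) (p : MvPolynomial σ R) :
    laplacian (X r * p) = X r * laplacian p + 2 * pderiv r p := by
  classical
  have h (i : σ) : pderiv i (pderiv i (X r * p)) =
      X r * pderiv i (pderiv i p) + if i = r then 2 * pderiv i p else 0 := by
    rcases eq_or_ne i r with rfl | hi
    · simp only [pderiv_mul, pderiv_X_self, map_add, one_mul, if_true]
      ring
    · simp [pderiv_X_of_ne hi.symm, hi]
  simp only [laplacian_apply, h, Finset.sum_add_distrib, Finset.mul_sum, Finset.sum_ite_eq',
    Finset.mem_univ, if_true]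

theorem laplacian_linForm_mul (v : σ → R) (p : MvPolynomial σ R) :
    laplacian (linForm v * p) = linForm v * laplacian p + 2 * dirDeriv v p := by
  simp only [linForm, dirDeriv_apply, Fintype.linearCombination_apply, Finset.sum_mul, map_sum,
    smul_mul_assoc, map_smul, laplacian_X_mul, smul_add, Finset.mul_sum, Finset.sum_add_distrib,
    mul_smul_comm]

theorem laplacian_dirDeriv (v : σ → R) (p : MvPolynomial σ R) :
    laplacian (dirDeriv v p) = dirDeriv v (laplacian p) := by
  classical
  simp only [laplacian_apply, map_sum, ← dirDeriv_single, dirDeriv_comm v]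

theorem laplacian_angular (v w : σ → R) (p : MvPolynomial σ R) :
    laplacian (angular v w p) = angular v w (laplacian p) := by
  simp only [angular_apply, map_sub, laplacian_linForm_mul, laplacian_dirDeriv, dirDeriv_comm v w]
  ring

/-- The radial component `∑ᵣ xᵣ uᵣ` of a tuple `u`. -/
noncomputable def radial : (σ → MvPolynomial σ R) →ₗ[R] MvPolynomial σ R :=
  ∑ r, LinearMap.mulLeft R (X r) ∘ₗ LinearMap.proj r

theorem radial_apply (u : σ → MvPolynomial σ R) : radial u = ∑ r, X r * u r := by
  simp [radial]

theorem radial_rot (v w : σ → R) (u : σ → MvPolynomial σ R) :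
    radial (rot v w u) = angular v w (radial u) := by
  have h (t : σ → R) (p : MvPolynomial σ R) : ∑ r, X r * t r • p = linForm t * p := by
    simp [linForm, Fintype.linearCombination_apply, Finset.sum_mul]
  have h' (t : σ → R) (p : MvPolynomial σ R) : ∑ r, p * (C (t r) * u r) = p * contract t u := by
    simp [contract_apply, Finset.mul_sum, smul_eq_C_mul]
  simp only [radial_apply, rot_apply, mul_add, mul_sub, Finset.sum_add_distrib,
    Finset.sum_sub_distrib, h, map_sum, Derivation.leibniz, smul_eq_mul]
  simp only [angular_apply v w (X _), dirDeriv_X, Finset.sum_sub_distrib,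
    ← h', mul_comm (u _), sub_mul, mul_assoc]
  ring

variable (σ R) in
/-- The tuples of harmonic polynomials, homogeneous of degree `k`, with zero radial component:
the space `Ĥ_{k,2}` over an arbitrary ring. -/
noncomputable def harmonicTuples (k : ℕ) : Submodule R (σ → MvPolynomial σ R) :=
  Submodule.pi Set.univ (fun _ => homogeneousSubmodule σ R k ⊓ laplacian.ker) ⊓ radial.ker

theorem mem_harmonicTuples {k : ℕ} {u : σ → MvPolynomial σ R} :
    u ∈ harmonicTuples σ R k ↔
      (∀ r, (u r).IsHomogeneous k ∧ laplacian (u r) = 0) ∧ radial u = 0 := by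
  simp [harmonicTuples]

theorem isHomogeneous_contract (v : σ → R) {k : ℕ} {u : σ → MvPolynomial σ R}
    (hu : u ∈ harmonicTuples σ R k) : (contract v u).IsHomogeneous k := by
  rw [contract_apply]
  exact (homogeneousSubmodule σ R k).sum_smul_mem v fun r _ => ((mem_harmonicTuples.1 hu).1 r).1

theorem laplacian_contract (v : σ → R) {k : ℕ} {u : σ → MvPolynomial σ R}
    (hu : u ∈ harmonicTuples σ R k) : laplacian (contract v u) = 0 := by
  simp [contract_apply, ((mem_harmonicTuples.1 hu).1 _).2]

/-- A subspace of tuples is rotation invariant if it is stable under the Lie algebra `o(n)`, that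
is, under all the operators `rot v w`. -/
def IsRotInvariant (W : Submodule R (σ → MvPolynomial σ R)) : Prop :=
  ∀ v w, ∀ u ∈ W, rot v w u ∈ W

theorem isRotInvariant_iff_single [DecidableEq σ] {W : Submodule R (σ → MvPolynomial σ R)} :
    IsRotInvariant W ↔ ∀ r s, ∀ u ∈ W, rot (Pi.single r 1) (Pi.single s 1) u ∈ W := by
  refine ⟨fun h r s => h _ _, fun h v w u hu => ?_⟩
  rw [pi_eq_sum_univ' v, pi_eq_sum_univ' w]
  simp only [map_sum, LinearMap.sum_apply, map_smul, LinearMap.smul_apply]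
  refine W.sum_mem fun s _ => W.smul_mem _ (W.sum_smul_mem v fun r _ => ?_)
  simpa only [Pi.single_apply] using h r s u hu

theorem isRotInvariant_of_lt [LinearOrder σ] {W : Submodule R (σ → MvPolynomial σ R)}
    (hW : ∀ r s, r < s → ∀ u ∈ W, rot (Pi.single r 1) (Pi.single s 1) u ∈ W) :
    IsRotInvariant W := by
  refine isRotInvariant_iff_single.2 fun r s u hu => ?_
  rcases lt_trichotomy r s with h | rfl | h
  · exact hW r s h u hu
  · simp [rot_self]
  · rw [rot_swap]
    exact W.neg_mem (hW s r h u hu)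

theorem isRotInvariant_harmonicTuples (k : ℕ) : IsRotInvariant (harmonicTuples σ R k) := by
  intro v w u hu
  obtain ⟨hh, hr⟩ := mem_harmonicTuples.1 hu
  refine mem_harmonicTuples.2 ⟨fun j => ⟨?_, ?_⟩, by rw [radial_rot, hr, map_zero]⟩
  · have hs (c : R) (t : σ → R) : (c • contract t u).IsHomogeneous k :=
      (homogeneousSubmodule σ R k).smul_mem c (isHomogeneous_contract t hu)
    rw [rot_apply, angular_apply]
    exact (((isHomogeneous_linForm_mul_dirDeriv v w (hh j).1).sub
      (isHomogeneous_linForm_mul_dirDeriv w v (hh j).1)).add (hs _ _)).sub (hs _ _)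
  · simp [rot_apply, laplacian_angular, laplacian_contract _ hu, (hh j).2]

theorem sum_pderiv_eq_zero [NoZeroDivisors R] [CharZero R] {k : ℕ} {u : σ → MvPolynomial σ R}
    (hu : u ∈ harmonicTuples σ R k) : ∑ r, pderiv r (u r) = 0 := by
  obtain ⟨hh, hr⟩ := mem_harmonicTuples.1 hu
  have h := congrArg laplacian hr
  simpa [radial_apply, laplacian_X_mul, (hh _).2, ← Finset.mul_sum] using h

theorem finite_harmonicTuples [IsNoetherianRing R] (k : ℕ) :
    Module.Finite R (harmonicTuples σ R k) := by
  have : IsNoetherian R (Submodule.pi Set.univ fun _ : σ => homogeneousSubmodule σ R k) :=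
    isNoetherian_of_fg_of_noetherian _ (Submodule.fg_pi fun _ => homogeneousSubmodule_fg σ R k)
  exact Module.Finite.iff_fg.2 (isNoetherian_submodule.1 this _ fun u hu r _ =>
    ((mem_harmonicTuples.1 hu).1 r).1)

end Operators

section FischerForm

variable {σ R : Type*} [Fintype σ] [CommRing R]

variable (R) in
/-- The product of factorials `α! = ∏ᵢ αᵢ!` of a multi-index, as an element of `R`. -/
def multiFactorial (α : σ →₀ ℕ) : R := ∏ i, ((α i).factorial : R)

theorem multiFactorial_add_single (α : σ →₀ ℕ) (r : σ) :
    multiFactorial R (α + Finsupp.single r 1) = (α r + 1) * multiFactorial R α := by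
  classical
  rw [multiFactorial, multiFactorial, ← Finset.mul_prod_erase _ _ (Finset.mem_univ r),
    ← Finset.mul_prod_erase _ (fun i => ((α i).factorial : R)) (Finset.mem_univ r), ← mul_assoc]
  congr 1
  · simp [Nat.factorial_succ]
  · refine Finset.prod_congr rfl fun i hi => ?_
    simp [(Finset.ne_of_mem_erase hi).symm]

/-- The Fischer form `⟨p, q⟩ = ∑ α! p_α q_α`, for which multiplication by `x_v` is adjoint to
`∂_v`. -/
noncomputable def fischer : LinearMap.BilinForm R (MvPolynomial σ R) :=
  (basisMonomials σ R).constr R fun α => multiFactorial R α • lcoeff R α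

theorem fischer_monomial (α : σ →₀ ℕ) (c : R) (q : MvPolynomial σ R) :
    fischer (monomial α c) q = c * (multiFactorial R α * coeff α q) := by
  have h := (basisMonomials σ R).constr_basis R (fun α => multiFactorial R α • lcoeff R α) α
  rw [coe_basisMonomials] at h
  rw [← mul_one c, ← smul_eq_mul, ← smul_monomial, map_smul, LinearMap.smul_apply, fischer, h]
  simp

theorem fischer_comm (p q : MvPolynomial σ R) : fischer p q = fischer q p := by
  classical
  induction p using MvPolynomial.induction_on' with
  | add p₁ p₂ h₁ h₂ => simp [h₁, h₂]
  | monomial α c =>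
    induction q using MvPolynomial.induction_on' with
    | add q₁ q₂ h₁ h₂ => simp [h₁, h₂]
    | monomial β d =>
      rcases eq_or_ne α β with rfl | h
      · simp only [fischer_monomial, coeff_monomial, if_true]
        ring
      · simp [fischer_monomial, coeff_monomial, h, h.symm]

theorem fischer_X_mul (r : σ) (p q : MvPolynomial σ R) :
    fischer (X r * p) q = fischer p (pderiv r q) := by
  induction p using MvPolynomial.induction_on' with
  | add p₁ p₂ h₁ h₂ => simp [mul_add, h₁, h₂]
  | monomial α c =>
    rw [X, monomial_mul, one_mul, add_comm, fischer_monomial, fischer_monomial, coeff_pderiv,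
      multiFactorial_add_single]
    ring

theorem fischer_linForm_mul (v : σ → R) (p q : MvPolynomial σ R) :
    fischer (linForm v * p) q = fischer p (dirDeriv v q) := by
  simp [linForm, dirDeriv_apply, Fintype.linearCombination_apply, Finset.sum_mul, fischer_X_mul,
    LinearMap.sum_apply]

theorem fischer_angular (v w : σ → R) (p q : MvPolynomial σ R) :
    fischer (angular v w p) q = -fischer p (angular v w q) := by
  have h (v w : σ → R) :
      fischer (linForm v * dirDeriv w p) q = fischer p (linForm w * dirDeriv v q) := by
    rw [fischer_linForm_mul, fischer_comm, ← fischer_linForm_mul, fischer_comm]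
  simp [angular_apply, h]

theorem fischer_linForm_pow (v w : σ → R) (k : ℕ) :
    fischer (linForm v ^ k) (linForm w ^ k) = k.factorial * (v ⬝ᵥ w) ^ k := by
  induction k with
  | zero =>
    have h := fischer_monomial (0 : σ →₀ ℕ) (1 : R) 1
    simpa [multiFactorial] using h
  | succ k ih =>
    rw [pow_succ', fischer_linForm_mul, Derivation.leibniz_pow, dirDeriv_linForm, map_nsmul,
      smul_eq_mul, mul_comm, ← smul_eq_C_mul, map_smul, Nat.add_sub_cancel, ih, nsmul_eq_mul,
      Nat.factorial_succ]
    push_cast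
    simp only [smul_eq_mul]
    ring

/-- The form `∑ⱼ ⟨uⱼ, u'ⱼ⟩` induced by the Fischer form on tuples of polynomials. -/
noncomputable def tupleForm : LinearMap.BilinForm R (σ → MvPolynomial σ R) :=
  ∑ j, fischer.compl₁₂ (LinearMap.proj j) (LinearMap.proj j)

theorem tupleForm_apply (u u' : σ → MvPolynomial σ R) :
    tupleForm u u' = ∑ j, fischer (u j) (u' j) := by
  simp [tupleForm, LinearMap.sum_apply]

theorem tupleForm_smul_const (v : σ → R) (p : MvPolynomial σ R) (u : σ → MvPolynomial σ R) :
    tupleForm (fun j => v j • p) u = fischer p (contract v u) := by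
  simp [tupleForm_apply, contract_apply]

theorem tupleForm_comm (u u' : σ → MvPolynomial σ R) : tupleForm u u' = tupleForm u' u := by
  simp only [tupleForm_apply, fischer_comm (u _)]

theorem tupleForm_rot (v w : σ → R) (u u' : σ → MvPolynomial σ R) :
    tupleForm (rot v w u) u' = -tupleForm u (rot v w u') := by
  have h (v w : σ → R) : ∑ j, fischer (v j • contract w u) (u' j) =
      ∑ j, fischer (u j) (w j • contract v u') := by
    rw [← tupleForm_apply, ← tupleForm_apply, tupleForm_smul_const, tupleForm_comm,
      tupleForm_smul_const, fischer_comm]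
  simp only [tupleForm_apply, rot_apply, map_add, map_sub, LinearMap.add_apply,
    LinearMap.sub_apply, fischer_angular, h, Finset.sum_add_distrib, Finset.sum_sub_distrib,
    Finset.sum_neg_distrib]
  ring

end FischerForm

section NullFrames

/-- A basis of `R^σ` adapted to the dot product: a hyperbolic pair of isotropic vectors `e`, `f`
with `e · f = 1`, together with orthonormal vectors `t a` orthogonal to both. -/
structure NullFrame (σ τ R : Type*) [Fintype σ] [Fintype τ] [DecidableEq τ] [CommRing R] where
  e : σ → R
  f : σ → R
  t : τ → σ → R
  e_dot_e : e ⬝ᵥ e = 0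
  f_dot_f : f ⬝ᵥ f = 0
  e_dot_f : e ⬝ᵥ f = 1
  e_dot_t : ∀ a, e ⬝ᵥ t a = 0
  f_dot_t : ∀ a, f ⬝ᵥ t a = 0
  t_dot_t : ∀ a b, t a ⬝ᵥ t b = if a = b then 1 else 0
  expand : ∀ v, v = (f ⬝ᵥ v) • e + (e ⬝ᵥ v) • f + ∑ a, (t a ⬝ᵥ v) • t a

namespace NullFrame

variable {σ τ R : Type*} [Fintype σ] [Fintype τ] [DecidableEq τ] [CommRing R]

/-- The frame with the two isotropic vectors exchanged. -/
def swap (F : NullFrame σ τ R) : NullFrame σ τ R where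
  e := F.f
  f := F.e
  t := F.t
  e_dot_e := F.f_dot_f
  f_dot_f := F.e_dot_e
  e_dot_f := by rw [dotProduct_comm, F.e_dot_f]
  e_dot_t := F.f_dot_t
  f_dot_t := F.e_dot_t
  t_dot_t := F.t_dot_t
  expand v := by rw [add_comm (_ • F.f)]; exact F.expand v

variable (F : NullFrame σ τ R)

theorem sum_single_single [DecidableEq σ] {M : Type*} [AddCommGroup M] [Module R M]
    (B : (σ → R) →ₗ[R] (σ → R) →ₗ[R] M) :
    ∑ i, B (Pi.single i 1) (Pi.single i 1) =
      B F.e F.f + B F.f F.e + ∑ a, B (F.t a) (F.t a) := by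
  have h (v w : σ → R) : ∑ i, (v ⬝ᵥ Pi.single i 1) • B (Pi.single i 1) w = B v w := by
    conv_rhs => rw [pi_eq_sum_univ' v]
    simp [LinearMap.sum_apply]
  simp only [← h F.e, ← h F.f, ← h (F.t _), ← map_smul]
  rw [Finset.sum_comm, ← Finset.sum_add_distrib, ← Finset.sum_add_distrib]
  refine Finset.sum_congr rfl fun i _ => ?_
  rw [add_comm (B _ _), ← map_sum, ← map_add, ← map_add, ← F.expand]

theorem sum_X_mul_pderiv (p : MvPolynomial σ R) :
    ∑ i, X i * pderiv i p = linForm F.e * dirDeriv F.f p + linForm F.f * dirDeriv F.e p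
      + ∑ a, linForm (F.t a) * dirDeriv (F.t a) p := by
  classical
  have h := F.sum_single_single (M := MvPolynomial σ R)
    (LinearMap.mk₂ R (fun v w => linForm v * dirDeriv w p)
      (by simp [add_mul]) (by simp) (by simp [mul_add]) (by simp))
  simpa only [LinearMap.mk₂_apply, linForm_single, dirDeriv_single] using h

theorem laplacian_eq (p : MvPolynomial σ R) :
    laplacian p = 2 * dirDeriv F.e (dirDeriv F.f p)
      + ∑ a, dirDeriv (F.t a) (dirDeriv (F.t a) p) := by
  classical
  rw [two_mul]
  nth_rw 2 [dirDeriv_comm]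
  simpa [laplacian_apply, dirDeriv_single] using F.sum_single_single
    (LinearMap.mk₂ R (fun v w => dirDeriv v (dirDeriv w p))
      (by simp) (by simp) (by simp) (by simp))

theorem radial_eq (u : σ → MvPolynomial σ R) :
    radial u = linForm F.e * contract F.f u + linForm F.f * contract F.e u
      + ∑ a, linForm (F.t a) * contract (F.t a) u := by
  classical
  have h := F.sum_single_single (M := MvPolynomial σ R)
    (LinearMap.mk₂ R (fun v w => linForm v * contract w u)
      (by simp [add_mul]) (by simp) (by simp [mul_add]) (by simp))
  simpa only [LinearMap.mk₂_apply, radial_apply, linForm_single, contract_single] using h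

theorem sum_pderiv_eq (u : σ → MvPolynomial σ R) :
    ∑ i, pderiv i (u i) = dirDeriv F.e (contract F.f u) + dirDeriv F.f (contract F.e u)
      + ∑ a, dirDeriv (F.t a) (contract (F.t a) u) := by
  classical
  have h := F.sum_single_single (M := MvPolynomial σ R)
    (LinearMap.mk₂ R (fun v w => dirDeriv v (contract w u))
      (by simp) (by simp) (by simp) (by simp))
  simpa only [LinearMap.mk₂_apply, dirDeriv_single, contract_single] using h

variable {F} in
theorem tuple_ext {u u' : σ → MvPolynomial σ R} (he : contract F.e u = contract F.e u')
    (hf : contract F.f u = contract F.f u')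
    (ht : ∀ a, contract (F.t a) u = contract (F.t a) u') : u = u' := by
  classical
  funext i
  have h : contract (Pi.single i 1) u = contract (Pi.single i 1) u' := by
    rw [F.expand (Pi.single i 1)]
    simp [he, hf, ht, LinearMap.sum_apply]
  simpa [contract_single] using h

/-- The frame attached to two distinct coordinates `i`, `j` and a square root `ι` of `-1`, with
isotropic vectors `e = ςᵢ + ι ςⱼ` and `f = (ςᵢ - ι ςⱼ) / 2`. -/
def ofSqrtNegOne {σ K : Type*} [Fintype σ] [DecidableEq σ] [Field K] [CharZero K] {i j : σ}
    (hij : i ≠ j) {ι : K} (hι : ι * ι = -1) : NullFrame σ ({i, j}ᶜ : Finset σ) K where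
  e := Pi.single i 1 + Pi.single j ι
  f := Pi.single i (1 / 2) - Pi.single j (ι / 2)
  t a := Pi.single a 1
  e_dot_e := by simp [hij, hij.symm, hι]
  f_dot_f := by
    simp only [dotProduct_sub, dotProduct_single, Pi.sub_apply, Pi.single_eq_same,
      Pi.single_eq_of_ne hij, Pi.single_eq_of_ne hij.symm]
    linear_combination hι / 4
  e_dot_f := by
    simp only [dotProduct_sub, dotProduct_single, Pi.add_apply, Pi.single_eq_same,
      Pi.single_eq_of_ne hij, Pi.single_eq_of_ne hij.symm]
    linear_combination -hι / 2
  e_dot_t a := by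
    obtain ⟨hi, hj⟩ : (a : σ) ≠ i ∧ (a : σ) ≠ j := by simpa using a.2
    simp [hi, hj]
  f_dot_t a := by
    obtain ⟨hi, hj⟩ : (a : σ) ≠ i ∧ (a : σ) ≠ j := by simpa using a.2
    simp [hi, hj]
  t_dot_t a b := by simp only [single_dotProduct, one_mul, Pi.single_apply, Subtype.ext_iff]
  expand v := by
    have ht : ∑ a : ({i, j}ᶜ : Finset σ), v a • Pi.single (a : σ) (1 : K) =
        v - v i • Pi.single i 1 - v j • Pi.single j 1 := by
      rw [Finset.sum_coe_sort ({i, j}ᶜ : Finset σ) fun a => v a • Pi.single a (1 : K),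
        eq_sub_iff_add_eq, eq_sub_iff_add_eq, add_assoc, add_comm (v j • _)]
      conv_rhs => rw [pi_eq_sum_univ' v, ← Finset.sum_compl_add_sum {i, j}, Finset.sum_pair hij]
    simp only [sub_dotProduct, add_dotProduct, single_dotProduct, one_mul, ht]
    funext x
    simp only [Pi.add_apply, Pi.sub_apply, Pi.smul_apply, Pi.single_apply, smul_eq_mul]
    split_ifs <;> grind

end NullFrame

end NullFrames

section TopTuples

variable {σ R : Type*} [Fintype σ] [CommRing R]

/-- The tuple `x_e ^ (k + 1) s - x_s x_e ^ k e`. For isotropic `e` and `s` orthogonal to `e`, these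
are the highest weight vectors of `harmonicTuples σ R (k + 1)` relative to `e`. -/
noncomputable def topTuple (e : σ → R) (k : ℕ) : (σ → R) →ₗ[R] (σ → MvPolynomial σ R) :=
  LinearMap.pi fun j => (LinearMap.proj j).smulRight (linForm e ^ (k + 1))
    - e j • LinearMap.mulRight R (linForm e ^ k) ∘ₗ linForm

theorem topTuple_apply (e s : σ → R) (k : ℕ) (j : σ) :
    topTuple e k s j = s j • linForm e ^ (k + 1) - e j • (linForm s * linForm e ^ k) := rfl

theorem contract_topTuple (v e s : σ → R) (k : ℕ) :
    contract v (topTuple e k s) =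
      (v ⬝ᵥ s) • linForm e ^ (k + 1) - (v ⬝ᵥ e) • (linForm s * linForm e ^ k) := by
  rw [← contract_smul_const, ← contract_smul_const, ← map_sub]
  rfl

theorem rot_topTuple {v w e : σ → R} (hv : v ⬝ᵥ e = 0) (hw : w ⬝ᵥ e = 0) (k : ℕ) (s : σ → R) :
    rot v w (topTuple e k s) = topTuple e k ((w ⬝ᵥ s) • v - (v ⬝ᵥ s) • w) := by
  have he (m : ℕ) : angular v w (linForm e ^ m) = 0 := by
    simp [Derivation.leibniz_pow, angular_linForm, hv, hw]
  funext j
  simp only [rot_apply, contract_topTuple, topTuple_apply, map_sub, Derivation.map_smul,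
    Derivation.leibniz, he, angular_linForm, hv, hw, map_smul, Pi.sub_apply, Pi.smul_apply]
  simp only [smul_eq_C_mul, smul_eq_mul, C_0, C_sub, C_mul]
  ring

end TopTuples

namespace NullFrame

section IsotropicDerivative

variable {σ τ R : Type*} [Fintype σ] [Fintype τ] [DecidableEq τ] [CommRing R] [IsDomain R]
  [CharZero R] (F : NullFrame σ τ R)

/- The operator `2 x_e ∂_f + ∑ₐ x_{tₐ} ∂_{tₐ}` is diagonalizable with eigenvalues in `ℕ`: it counts
the factors `x_e` twice and each `x_{tₐ}` once. -/
theorem eq_zero_of_two_smul_add_sum_add_smul_eq_zero {d c : ℕ} (hc : c ≠ 0)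
    {p : MvPolynomial σ R} (hp : p.IsHomogeneous d)
    (h : 2 • (linForm F.e * dirDeriv F.f p) + ∑ a, linForm (F.t a) * dirDeriv (F.t a) p
      + c • p = 0) : p = 0 := by
  suffices hd : dirDeriv F.f p = 0 ∧ ∀ a, dirDeriv (F.t a) p = 0 by simpa [hd, hc] using h
  induction d generalizing c p with
  | zero =>
    rw [totalDegree_eq_zero_iff_eq_C.1 (Nat.le_zero.1 hp.totalDegree_le), ← algebraMap_eq]
    simp only [Derivation.map_algebraMap, implies_true, and_self]
  | succ d ih =>
    have hih {v : σ → R} {c' : ℕ} (hc' : c' ≠ 0)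
        (hv : 2 • (linForm F.e * dirDeriv F.f (dirDeriv v p))
          + ∑ a, linForm (F.t a) * dirDeriv (F.t a) (dirDeriv v p) + c' • dirDeriv v p = 0) :
        dirDeriv v p = 0 := by
      have hd := ih hc' (isHomogeneous_dirDeriv v hp) hv
      simpa [hd, hc'] using hv
    refine ⟨hih (c' := c + 2) (by lia) ?_, fun b => hih (c' := c + 1) (by lia) ?_⟩
    · have hf := congrArg (dirDeriv F.f) h
      simp only [map_add, map_sum, map_nsmul, map_zero, dirDeriv_linForm_mul, F.f_dot_t,
        dotProduct_comm F.f F.e, F.e_dot_f, dirDeriv_comm F.f (F.t _), C_1, zero_mul, one_mul,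
        add_zero] at hf
      simp only [nsmul_eq_mul] at hf ⊢
      push_cast at hf ⊢
      linear_combination hf
    · have hb := congrArg (dirDeriv (F.t b)) h
      simp only [map_add, map_sum, map_nsmul, map_zero, dirDeriv_linForm_mul, F.t_dot_t,
        dotProduct_comm (F.t b) F.e, F.e_dot_t, dirDeriv_comm (F.t b), apply_ite C, ite_mul, C_1,
        zero_mul, one_mul, add_zero, Finset.sum_add_distrib, Finset.sum_ite_eq,
        Finset.mem_univ, if_true] at hb
      simp only [nsmul_eq_mul] at hb ⊢
      push_cast at hb ⊢
      linear_combination hb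

theorem dirDeriv_eq_zero_of_angular_eq [Nonempty τ] {d : ℕ} {p : MvPolynomial σ R}
    {q : τ → MvPolynomial σ R} (hp : p.IsHomogeneous d) (hΔ : laplacian p = 0)
    (h : ∀ a, angular F.e (F.t a) p = q a) (hq : ∀ a, dirDeriv (F.t a) (q a) = 0) :
    dirDeriv F.e p = 0 := by
  have ht (a : τ) : linForm F.e * dirDeriv (F.t a) (dirDeriv (F.t a) p) =
      linForm (F.t a) * dirDeriv (F.t a) (dirDeriv F.e p) + dirDeriv F.e p := by
    have ha := congrArg (dirDeriv (F.t a)) (h a)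
    rw [hq, angular_apply, map_sub, dirDeriv_linForm_mul, dirDeriv_linForm_mul,
      dotProduct_comm _ F.e, F.e_dot_t, F.t_dot_t, if_pos rfl, C_0, C_1] at ha
    linear_combination ha
  refine F.eq_zero_of_two_smul_add_sum_add_smul_eq_zero (Fintype.card_ne_zero (α := τ))
    (isHomogeneous_dirDeriv F.e hp) ?_
  have hsum := Finset.sum_congr rfl fun a (_ : a ∈ Finset.univ) => ht a
  rw [← Finset.mul_sum, Finset.sum_add_distrib, Finset.sum_const, Finset.card_univ] at hsum
  rw [F.laplacian_eq] at hΔ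
  rw [dirDeriv_comm F.f, two_nsmul]
  linear_combination linForm F.e * hΔ - hsum

end IsotropicDerivative

section HighestWeight

variable {σ τ K : Type*} [Fintype σ] [Fintype τ] [DecidableEq τ] [Field K] [CharZero K]
  (F : NullFrame σ τ K)

theorem linForm_e_ne_zero : linForm F.e ≠ 0 := fun he => by
  simpa [dirDeriv_linForm, dotProduct_comm F.f, F.e_dot_f] using congrArg (dirDeriv F.f) he

theorem exists_eq_smul_pow {d : ℕ} {p : MvPolynomial σ K} (hp : p.IsHomogeneous d)
    (he : dirDeriv F.e p = 0) (ht : ∀ a, dirDeriv (F.t a) p = 0) :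
    ∃ c : K, p = c • linForm F.e ^ d := by
  induction d generalizing p with
  | zero =>
    exact ⟨coeff 0 p, by
      simpa [smul_eq_C_mul] using totalDegree_eq_zero_iff_eq_C.1 (Nat.le_zero.1 hp.totalDegree_le)⟩
  | succ d ih =>
    obtain ⟨c, hc⟩ := ih (isHomogeneous_dirDeriv F.f hp) (by rw [dirDeriv_comm, he, map_zero])
      fun a => by rw [dirDeriv_comm, ht, map_zero]
    have hEuler : (d + 1 : K) • p = c • linForm F.e ^ (d + 1) := by
      have h := (F.sum_X_mul_pderiv p).symm.trans hp.sum_X_mul_pderiv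
      simp only [he, ht, hc, mul_zero, Finset.sum_const_zero, add_zero, mul_smul_comm,
        ← pow_succ'] at h
      rw [h, ← Nat.cast_smul_eq_nsmul K]
      push_cast
      rfl
    exact ⟨(d + 1 : K)⁻¹ * c, by
      rw [mul_smul, ← hEuler, inv_smul_smul₀ (Nat.cast_add_one_ne_zero d)]⟩

variable [Nonempty τ] {k : ℕ}

theorem dirDeriv_eq_of_angular_eq_smul_pow {d : ℕ} {p : MvPolynomial σ K} {c : τ → K}
    (hp : p.IsHomogeneous d) (hΔ : laplacian p = 0)
    (h : ∀ a, angular F.e (F.t a) p = c a • linForm F.e ^ (k + 1)) :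
    dirDeriv F.e p = 0 ∧ ∀ a, dirDeriv (F.t a) p = c a • linForm F.e ^ k := by
  have he : dirDeriv F.e p = 0 := F.dirDeriv_eq_zero_of_angular_eq hp hΔ h fun a => by
    simp [Derivation.leibniz_pow, dirDeriv_linForm, dotProduct_comm _ F.e, F.e_dot_t]
  refine ⟨he, fun a => mul_left_cancel₀ F.linForm_e_ne_zero ?_⟩
  rw [mul_smul_comm, ← pow_succ', ← h, angular_apply, he, mul_zero, sub_zero]

theorem contract_e_eq_zero {u : σ → MvPolynomial σ K} (hu : u ∈ harmonicTuples σ K (k + 1))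
    (hraise : ∀ a, rot F.e (F.t a) u = 0) : contract F.e u = 0 := by
  have hg := F.dirDeriv_eq_of_angular_eq_smul_pow (k := k) (c := 0) (isHomogeneous_contract F.e hu)
    (laplacian_contract F.e hu) fun a => by
      simp [angular_contract_of_rot_eq_zero (hraise _), F.e_dot_e, F.e_dot_t]
  obtain ⟨c, hc⟩ := F.exists_eq_smul_pow (isHomogeneous_contract F.e hu) hg.1 fun a => by
    simp [hg.2]
  have ht (b : τ) : dirDeriv F.e (contract (F.t b) u) = 0 ∧
      dirDeriv (F.t b) (contract (F.t b) u) = c • linForm F.e ^ k := by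
    have h := F.dirDeriv_eq_of_angular_eq_smul_pow (k := k) (c := fun a => if b = a then c else 0)
      (isHomogeneous_contract (F.t b) hu) (laplacian_contract _ hu) fun a => by
        simp [angular_contract_of_rot_eq_zero (hraise _), F.t_dot_t, dotProduct_comm _ F.e,
          F.e_dot_t, hc]
    simpa using And.intro h.1 (h.2 b)
  have hf : dirDeriv F.e (contract F.f u) = -(c • linForm F.e ^ k) := by
    have h := congrArg (dirDeriv F.e) ((F.radial_eq u).symm.trans (mem_harmonicTuples.1 hu).2)
    simp only [map_add, map_sum, map_zero, dirDeriv_linForm_mul, F.e_dot_e, F.e_dot_f, F.e_dot_t,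
      ht, hg.1, C_1, zero_mul, one_mul, mul_zero, add_zero, zero_add, Finset.sum_const_zero] at h
    refine mul_left_cancel₀ F.linForm_e_ne_zero ?_
    rw [mul_neg, mul_smul_comm, ← pow_succ', eq_neg_of_add_eq_zero_left h, hc]
  have hdiv : ((k + Fintype.card τ : ℕ) * c) • linForm F.e ^ k = 0 := by
    have h := (F.sum_pderiv_eq u).symm.trans (sum_pderiv_eq_zero hu)
    simp only [hf, hc, ht, Derivation.map_smul, Derivation.leibniz_pow, dirDeriv_linForm,
      dotProduct_comm F.f F.e, F.e_dot_f, Finset.sum_const, Finset.card_univ, C_1,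
      Nat.add_sub_cancel] at h
    simp only [smul_eq_C_mul, nsmul_eq_mul, smul_eq_mul, C_mul, map_natCast] at h ⊢
    push_cast at h ⊢
    linear_combination h
  have hc0 : c = 0 := by
    simpa [F.linForm_e_ne_zero, smul_eq_zero, ← Nat.cast_add] using hdiv
  rw [hc, hc0, zero_smul]

theorem exists_eq_topTuple_of_raising_eq_zero {u : σ → MvPolynomial σ K}
    (hu : u ∈ harmonicTuples σ K (k + 1)) (hraise : ∀ a, rot F.e (F.t a) u = 0) :
    ∃ c : τ → K, u = topTuple F.e k (∑ a, c a • F.t a) := by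
  have he := F.contract_e_eq_zero hu hraise
  have ht (b : τ) : ∃ c : K, contract (F.t b) u = c • linForm F.e ^ (k + 1) := by
    have h := F.dirDeriv_eq_of_angular_eq_smul_pow (k := k) (c := 0)
      (isHomogeneous_contract (F.t b) hu) (laplacian_contract _ hu) fun a => by
        simp [angular_contract_of_rot_eq_zero (hraise _), he, dotProduct_comm _ F.e, F.e_dot_t]
    exact F.exists_eq_smul_pow (isHomogeneous_contract _ hu) h.1 fun a => by simp [h.2]
  choose c hc using ht
  have hf : contract F.f u = -(linForm (∑ a, c a • F.t a) * linForm F.e ^ k) := by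
    refine mul_left_cancel₀ F.linForm_e_ne_zero ?_
    have h := (F.radial_eq u).symm.trans (mem_harmonicTuples.1 hu).2
    simp only [he, hc, mul_zero, add_zero] at h
    simp only [map_sum, map_smul, Finset.sum_mul, smul_mul_assoc]
    rw [eq_neg_of_add_eq_zero_left h, mul_neg, Finset.mul_sum]
    refine congrArg _ (Finset.sum_congr rfl fun a _ => ?_)
    simp only [smul_eq_C_mul]
    ring
  refine ⟨c, F.tuple_ext ?_ ?_ fun b => ?_⟩
  · simp [contract_topTuple, he, F.e_dot_e, F.e_dot_t]
  · simp [contract_topTuple, hf, dotProduct_comm F.f F.e, F.e_dot_f, F.f_dot_t, Finset.sum_mul]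
  · simp [contract_topTuple, hc, dotProduct_comm _ F.e, F.e_dot_t, F.t_dot_t]

end HighestWeight

end NullFrame

section RaisingOperators

theorem exists_ne_zero_forall_apply_eq_zero_of_lie_eq {ι K V : Type*} [Field K] [IsAlgClosed K]
    [CharZero K] [AddCommGroup V] [Module K V] [FiniteDimensional K V] [Nontrivial V]
    {h : Module.End K V} {N : ι → Module.End K V} (hN : ∀ a, ⁅h, N a⁆ = N a) :
    ∃ v ≠ 0, ∀ a, N a v = 0 := by
  obtain ⟨μ, hμ, hμ'⟩ : ∃ μ, h.HasEigenvalue μ ∧ ¬h.HasEigenvalue (μ + 1) := by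
    by_contra! hall
    obtain ⟨μ₀, hμ₀⟩ := h.exists_eigenvalue
    have hmem (m : ℕ) : h.HasEigenvalue (μ₀ + m) := by
      induction m with
      | zero => simpa using hμ₀
      | succ m ih => simpa [add_assoc] using hall _ ih
    exact Set.infinite_of_injective_forall_mem
      ((add_right_injective μ₀).comp Nat.cast_injective) hmem h.finite_hasEigenvalue
  obtain ⟨v, hv⟩ := hμ.exists_hasEigenvector
  refine ⟨v, hv.2, fun a => by_contra fun hne => hμ' ?_⟩
  refine Module.End.hasEigenvalue_of_hasEigenvector (x := N a v)
    ⟨Module.End.mem_eigenspace_iff.2 ?_, hne⟩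
  have hcomm : h (N a v) - N a (h v) = N a v := congrArg (fun f : Module.End K V => f v) (hN a)
  rw [hv.apply_eq_smul, map_smul] at hcomm
  rw [eq_add_of_sub_eq hcomm, add_smul, one_smul, add_comm]

namespace NullFrame

variable {σ τ K : Type*} [Fintype σ] [Fintype τ] [DecidableEq τ] [Field K]
  (F : NullFrame σ τ K)

theorem t_dot_sum_smul (c : τ → K) (a : τ) : F.t a ⬝ᵥ ∑ b, c b • F.t b = c a := by
  simp [dotProduct_sum, F.t_dot_t]

theorem t_mem_of_sum_smul_t_mem (hτ : Fintype.card τ ≠ 2) {S : Submodule K (σ → K)}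
    (hS : ∀ a b, ∀ s ∈ S, (F.t b ⬝ᵥ s) • F.t a - (F.t a ⬝ᵥ s) • F.t b ∈ S) {c : τ → K}
    (hc : c ≠ 0) (hs : ∑ a, c a • F.t a ∈ S) (d : τ) : F.t d ∈ S := by
  obtain ⟨a, ha⟩ := Function.ne_iff.1 hc
  have hother (d : τ) (hd : d ≠ a) : F.t d ∈ S := by
    have hcard : 2 < Fintype.card τ :=
      lt_of_le_of_ne (Fintype.one_lt_card_iff.2 ⟨d, a, hd⟩) hτ.symm
    obtain ⟨b, -, hb⟩ := Finset.exists_mem_notMem_of_card_lt_card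
      (Finset.card_le_two.trans_lt hcard : ({a, d} : Finset τ).card < Finset.univ.card)
    obtain ⟨hba, hbd⟩ : b ≠ a ∧ b ≠ d := by simpa using hb
    have h := hS b d _ (hS a b _ hs)
    simp only [t_dot_sum_smul, dotProduct_sub, dotProduct_smul, F.t_dot_t, if_neg hd,
      if_neg hba, if_neg hbd.symm, if_true, smul_eq_mul, mul_one] at h
    simpa using (S.smul_mem_iff ha).1 (by simpa using h)
  rcases eq_or_ne d a with rfl | hd
  · by_cases hτ' : ∃ b, b ≠ d
    · obtain ⟨b, hb⟩ := hτ'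
      simpa [F.t_dot_t, hb.symm] using hS d b _ (hother b hb)
    · push Not at hτ'
      rw [Fintype.sum_eq_single d fun b hb => absurd (hτ' b) hb] at hs
      exact (S.smul_mem_iff ha).1 hs
  · exact hother d hd

theorem lie_rot_e_f (a : τ) : ⁅rot F.e F.f, rot F.e (F.t a)⁆ = rot F.e (F.t a) := by
  simp [lie_rot, dotProduct_comm F.f F.e, F.e_dot_f, F.f_dot_t, F.e_dot_e, F.e_dot_t]

variable [CharZero K] [IsAlgClosed K]

theorem exists_ne_zero_raising_eq_zero {W : Submodule K (σ → MvPolynomial σ K)}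
    [FiniteDimensional K W] (hW : IsRotInvariant W) (hW0 : W ≠ ⊥) :
    ∃ u ∈ W, u ≠ 0 ∧ ∀ a, rot F.e (F.t a) u = 0 := by
  have : Nontrivial W := Submodule.nontrivial_iff_ne_bot.2 hW0
  obtain ⟨u, hu0, hu⟩ := exists_ne_zero_forall_apply_eq_zero_of_lie_eq (K := K)
    (h := (rot F.e F.f).restrict (hW _ _)) (N := fun a => (rot F.e (F.t a)).restrict (hW _ _))
    fun a => LinearMap.ext fun u => Subtype.ext <|
      congrArg (fun g : Module.End K (σ → MvPolynomial σ K) => g u) (F.lie_rot_e_f a)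
  exact ⟨u, u.2, fun h => hu0 (Subtype.ext h), fun a => congrArg Subtype.val (hu a)⟩

theorem topTuple_mem [Nonempty τ] (hτ : Fintype.card τ ≠ 2) {k : ℕ}
    {W : Submodule K (σ → MvPolynomial σ K)} (hWH : W ≤ harmonicTuples σ K (k + 1))
    (hW : IsRotInvariant W) (hW0 : W ≠ ⊥) (a : τ) : topTuple F.e k (F.t a) ∈ W := by
  have := finite_harmonicTuples (σ := σ) (R := K) (k + 1)
  have : FiniteDimensional K W := Submodule.finiteDimensional_of_le hWH
  obtain ⟨u, huW, hu0, hu⟩ := F.exists_ne_zero_raising_eq_zero hW hW0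
  obtain ⟨c, rfl⟩ := F.exists_eq_topTuple_of_raising_eq_zero (hWH huW) hu
  refine F.t_mem_of_sum_smul_t_mem hτ (S := W.comap (topTuple F.e k)) (fun a b s hs => ?_)
    (by rintro rfl; simp at hu0) huW a
  have h := hW (F.t a) (F.t b) _ hs
  rwa [rot_topTuple (by rw [dotProduct_comm, F.e_dot_t]) (by rw [dotProduct_comm, F.e_dot_t])] at h

end NullFrame

end RaisingOperators

section Complement

theorem eq_of_le_of_forall_apply_eq_zero {K V : Type*} [Field K] [AddCommGroup V] [Module K V]
    (B : LinearMap.BilinForm K V) {W H : Submodule K V} [FiniteDimensional K H] (hWH : W ≤ H)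
    (h : ∀ u ∈ H, (∀ w ∈ W, B w u = 0) → u = 0) : W = H := by
  have : FiniteDimensional K W := Submodule.finiteDimensional_of_le hWH
  refine Submodule.eq_of_le_of_finrank_le hWH ?_
  rw [← Subspace.dual_finrank_eq (V := W)]
  refine LinearMap.finrank_le_finrank_of_injective (f := (B.domRestrict₁₂ W H).flip) <|
    (injective_iff_map_eq_zero _).2 fun u hu => Subtype.ext <| h u u.2 fun w hw => ?_
  exact congrArg (fun g : Module.Dual K W => g ⟨w, hw⟩) hu

variable {σ R : Type*} [Fintype σ] [CommRing R]

theorem IsRotInvariant.inf {W W' : Submodule R (σ → MvPolynomial σ R)} (hW : IsRotInvariant W)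
    (hW' : IsRotInvariant W') : IsRotInvariant (W ⊓ W') :=
  fun v w u hu => ⟨hW v w u hu.1, hW' v w u hu.2⟩

theorem IsRotInvariant.orthogonal {W : Submodule R (σ → MvPolynomial σ R)}
    (hW : IsRotInvariant W) : IsRotInvariant (tupleForm.orthogonal W) := fun v w u hu x hx => by
  rw [← neg_eq_zero, ← tupleForm_rot]
  exact hu _ (hW v w x hx)

end Complement

namespace NullFrame

variable {σ τ : Type*} [Fintype σ] [Fintype τ] [DecidableEq τ]

theorem tupleForm_topTuple_topTuple {R : Type*} [CommRing R] (F : NullFrame σ τ R) (k : ℕ)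
    (a : τ) : tupleForm (topTuple F.e k (F.t a)) (topTuple F.f k (F.t a)) =
      ((k + 1).factorial + k.factorial : ℕ) := by
  have hsplit : topTuple F.e k (F.t a) = (fun j => F.t a j • linForm F.e ^ (k + 1)) -
      fun j => F.e j • (linForm (F.t a) * linForm F.e ^ k) := rfl
  have hf : dirDeriv (F.t a) (linForm F.f ^ k) = 0 := by
    simp [Derivation.leibniz_pow, dirDeriv_linForm, dotProduct_comm _ F.f, F.f_dot_t]
  have hcross : fischer (linForm (F.t a) * linForm F.e ^ k) (linForm (F.t a) * linForm F.f ^ k) =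
      (k.factorial : R) := by
    rw [fischer_linForm_mul, dirDeriv_linForm_mul, hf, F.t_dot_t]
    simp [fischer_linForm_pow, F.e_dot_f]
  simp [hsplit, tupleForm_smul_const, contract_topTuple, fischer_linForm_pow, hcross,
    F.t_dot_t, F.e_dot_f, F.e_dot_t, dotProduct_comm _ F.f, F.f_dot_t]

variable {K : Type*} [Field K] [CharZero K] [IsAlgClosed K] [Nonempty τ]

theorem eq_harmonicTuples (F : NullFrame σ τ K) (hτ : Fintype.card τ ≠ 2) {k : ℕ}
    {W : Submodule K (σ → MvPolynomial σ K)} (hWH : W ≤ harmonicTuples σ K (k + 1))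
    (hW : IsRotInvariant W) (hW0 : W ≠ ⊥) : W = harmonicTuples σ K (k + 1) := by
  have := finite_harmonicTuples (σ := σ) (R := K) (k + 1)
  refine eq_of_le_of_forall_apply_eq_zero tupleForm hWH fun u hu hperp => ?_
  by_contra hu0
  obtain ⟨a⟩ := ‹Nonempty τ›
  have he : topTuple F.e k (F.t a) ∈ W := F.topTuple_mem hτ hWH hW hW0 a
  have hf : topTuple F.f k (F.t a) ∈ harmonicTuples σ K (k + 1) ⊓ tupleForm.orthogonal W :=
    F.swap.topTuple_mem hτ inf_le_left ((isRotInvariant_harmonicTuples _).inf hW.orthogonal)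
      ((Submodule.ne_bot_iff _).2 ⟨u, ⟨hu, hperp⟩, hu0⟩) a
  have hval := (F.tupleForm_topTuple_topTuple k a).symm.trans (hf.2 _ he)
  exact (Nat.cast_ne_zero.2 (by positivity)) hval

end NullFrame

theorem eq_harmonicTuples_of_isAlgClosed {σ K : Type*} [Fintype σ] [Field K] [CharZero K]
    [IsAlgClosed K] (hσ : 3 ≤ Fintype.card σ) (hσ' : Fintype.card σ ≠ 4) {k : ℕ}
    {W : Submodule K (σ → MvPolynomial σ K)} (hWH : W ≤ harmonicTuples σ K (k + 1))
    (hW : IsRotInvariant W) (hW0 : W ≠ ⊥) : W = harmonicTuples σ K (k + 1) := by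
  classical
  obtain ⟨i, j, hij⟩ := Fintype.one_lt_card_iff.1 (show 1 < Fintype.card σ by lia)
  obtain ⟨ι, hι⟩ := IsAlgClosed.exists_eq_mul_self (-1 : K)
  have hcard : Fintype.card ({i, j}ᶜ : Finset σ) = Fintype.card σ - 2 := by
    rw [Fintype.card_coe, Finset.card_compl, Finset.card_pair hij]
  have : Nonempty ({i, j}ᶜ : Finset σ) := Fintype.card_pos_iff.1 (by lia)
  exact (NullFrame.ofSqrtNegOne hij hι.symm).eq_harmonicTuples (by lia) hWH hW hW0

section Descent

variable {σ K L : Type*} [CommRing K] [CommRing L] [Algebra K L]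

/-- The map on polynomials applying a `K`-linear functional `φ : L → K` to each coefficient. -/
noncomputable def mapCoeff (φ : Module.Dual K L) : MvPolynomial σ L →ₗ[K] MvPolynomial σ K :=
  (basisMonomials σ K).repr.symm.toLinearMap ∘ₗ Finsupp.mapRange.linearMap φ ∘ₗ
    (basisMonomials σ L).repr.toLinearMap.restrictScalars K

theorem coeff_mapCoeff (φ : Module.Dual K L) (p : MvPolynomial σ L) (α : σ →₀ ℕ) :
    coeff α (mapCoeff φ p) = φ (coeff α p) := rfl

theorem mapCoeff_map_algebraMap (φ : Module.Dual K L) (p : MvPolynomial σ K) :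
    mapCoeff φ (map (algebraMap K L) p) = φ 1 • p := by
  ext α
  rw [coeff_mapCoeff, coeff_map, Algebra.algebraMap_eq_smul_one, map_smul, coeff_smul, smul_eq_mul,
    smul_eq_mul, mul_comm]

theorem forall_mapCoeff_eq_zero_iff [Module.Projective K L] {p : MvPolynomial σ L} :
    (∀ φ : Module.Dual K L, mapCoeff φ p = 0) ↔ p = 0 := by
  simp only [MvPolynomial.ext_iff, coeff_mapCoeff, coeff_zero]
  rw [forall_comm]
  exact forall_congr' fun α => Module.forall_dual_apply_eq_zero_iff K _

theorem forall_isHomogeneous_mapCoeff_iff [Module.Projective K L] {k : ℕ}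
    {p : MvPolynomial σ L} :
    (∀ φ : Module.Dual K L, (mapCoeff φ p).IsHomogeneous k) ↔ p.IsHomogeneous k := by
  refine ⟨fun h α hα => ?_, fun h φ α hα => h fun h0 => hα (by rw [coeff_mapCoeff, h0, map_zero])⟩
  obtain ⟨φ, hφ⟩ := not_forall.1 fun h0 => hα ((Module.forall_dual_apply_eq_zero_iff K _).1 h0)
  exact h φ hφ

theorem mapCoeff_X_mul (φ : Module.Dual K L) (r : σ) (p : MvPolynomial σ L) :
    mapCoeff φ (X r * p) = X r * mapCoeff φ p := by
  classical
  ext α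
  simp only [coeff_mapCoeff, coeff_X_mul']
  split_ifs <;> simp

theorem mapCoeff_pderiv (φ : Module.Dual K L) (r : σ) (p : MvPolynomial σ L) :
    mapCoeff φ (pderiv r p) = pderiv r (mapCoeff φ p) := by
  ext α
  have h (c : L) : c * (α r + 1 : L) = (α r + 1) • c := by
    rw [nsmul_eq_mul, mul_comm]
    push_cast
    rfl
  rw [coeff_mapCoeff, coeff_pderiv, coeff_pderiv, coeff_mapCoeff, h, map_nsmul, nsmul_eq_mul,
    mul_comm]
  push_cast
  rfl

/-- For a field `K`, the `L`-span of a `K`-subspace `W` of tuples, encoded as the set of tuples over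
`L` whose image under every coefficient functional `φ : L → K` lies in `W`. -/
def baseChange (L : Type*) [CommRing L] [Algebra K L] (W : Submodule K (σ → MvPolynomial σ K)) :
    Submodule L (σ → MvPolynomial σ L) where
  carrier := {u | ∀ φ : Module.Dual K L, mapCoeff φ ∘ u ∈ W}
  zero_mem' φ := by
    have h : mapCoeff φ ∘ (0 : σ → MvPolynomial σ L) = 0 := funext fun _ => map_zero _
    exact h ▸ W.zero_mem
  add_mem' {u u'} hu hu' φ := by
    have h : mapCoeff φ ∘ (u + u') = mapCoeff φ ∘ u + mapCoeff φ ∘ u' :=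
      funext fun _ => map_add _ _ _
    exact h ▸ W.add_mem (hu φ) (hu' φ)
  smul_mem' c u hu φ := by
    have h : mapCoeff φ ∘ (c • u) = mapCoeff (φ ∘ₗ LinearMap.mulLeft K c) ∘ u := by
      ext
      simp [coeff_mapCoeff]
    exact h ▸ hu _

theorem mem_baseChange {W : Submodule K (σ → MvPolynomial σ K)} {u : σ → MvPolynomial σ L} :
    u ∈ baseChange L W ↔ ∀ φ : Module.Dual K L, mapCoeff φ ∘ u ∈ W := Iff.rfl

variable (L) in
theorem baseChange_mono {W W' : Submodule K (σ → MvPolynomial σ K)} (h : W ≤ W') :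
    baseChange L W ≤ baseChange L W' := fun _ hu φ => h (hu φ)

theorem baseChange_bot [Module.Projective K L] :
    baseChange L (⊥ : Submodule K (σ → MvPolynomial σ K)) = ⊥ := by
  ext u
  simp only [mem_baseChange, Submodule.mem_bot, funext_iff, Function.comp_apply, Pi.zero_apply]
  rw [forall_comm]
  exact forall_congr' fun j => forall_mapCoeff_eq_zero_iff

variable [Fintype σ]

theorem mapCoeff_laplacian (φ : Module.Dual K L) (p : MvPolynomial σ L) :
    mapCoeff φ (laplacian p) = laplacian (mapCoeff φ p) := by
  simp only [laplacian_apply, map_sum, mapCoeff_pderiv]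

theorem mapCoeff_radial (φ : Module.Dual K L) (u : σ → MvPolynomial σ L) :
    mapCoeff φ (radial u) = radial (mapCoeff φ ∘ u) := by
  simp only [radial_apply, map_sum, mapCoeff_X_mul, Function.comp_apply]

theorem mapCoeff_comp_rot_single [DecidableEq σ] (φ : Module.Dual K L) (r s : σ)
    (u : σ → MvPolynomial σ L) :
    mapCoeff φ ∘ rot (Pi.single r 1) (Pi.single s 1) u =
      rot (Pi.single r 1) (Pi.single s 1) (mapCoeff φ ∘ u) := by
  have h (i j : σ) (p : MvPolynomial σ L) : mapCoeff φ ((Pi.single i 1 : σ → L) j • p) =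
      (Pi.single i 1 : σ → K) j • mapCoeff φ p := by
    rcases eq_or_ne j i with rfl | hj <;> simp [*]
  funext j
  simp only [Function.comp_apply, rot_apply, angular_apply, linForm_single, dirDeriv_single,
    contract_single, map_add, map_sub, mapCoeff_X_mul, mapCoeff_pderiv, h]

theorem baseChange_harmonicTuples [Module.Projective K L] (k : ℕ) :
    baseChange L (harmonicTuples σ K k) = harmonicTuples σ L k := by
  ext u
  simp only [mem_baseChange, mem_harmonicTuples, Function.comp_apply, ← mapCoeff_laplacian,
    ← mapCoeff_radial, forall_and, forall_mapCoeff_eq_zero_iff]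
  rw [forall_comm, forall_comm (α := Module.Dual K L)]
  simp only [forall_isHomogeneous_mapCoeff_iff, forall_mapCoeff_eq_zero_iff]

theorem IsRotInvariant.baseChange {W : Submodule K (σ → MvPolynomial σ K)}
    (hW : IsRotInvariant W) : IsRotInvariant (baseChange L W) := by
  classical
  refine isRotInvariant_iff_single.2 fun r s u hu φ => ?_
  rw [mapCoeff_comp_rot_single]
  exact hW _ _ _ (hu φ)

end Descent

section FieldDescent

variable {σ K L : Type*} [Field K] [CommRing L] [Nontrivial L] [Algebra K L]

variable (L) in
theorem map_algebraMap_comp_mem_baseChange {W : Submodule K (σ → MvPolynomial σ K)}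
    {u : σ → MvPolynomial σ K} : map (algebraMap K L) ∘ u ∈ baseChange L W ↔ u ∈ W := by
  have h (φ : Module.Dual K L) : mapCoeff φ ∘ map (algebraMap K L) ∘ u = φ 1 • u :=
    funext fun j => mapCoeff_map_algebraMap φ (u j)
  obtain ⟨φ, hφ⟩ := Module.Projective.exists_dual_eq_one K (one_ne_zero (α := L))
  simp only [mem_baseChange, h]
  exact ⟨fun hu => by simpa [hφ] using hu φ, fun hu φ => W.smul_mem _ hu⟩

variable (σ K L) in
theorem baseChange_injective :
    Function.Injective (baseChange L : Submodule K (σ → MvPolynomial σ K) → _) :=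
  fun W W' h => by
    ext u
    rw [← map_algebraMap_comp_mem_baseChange L, h, map_algebraMap_comp_mem_baseChange]

end FieldDescent

section RealTuples

theorem Hk2Set_eq_coe (n k : ℕ) : Hk2Set n k = (harmonicTuples (Fin n) ℝ k : Set _) := by
  ext u
  simp [Hk2Set, lap, mem_harmonicTuples, laplacian_apply, radial_apply]

theorem Lop_eq_rot {n : ℕ} (r s : Fin n) (u : Fin n → MvPolynomial (Fin n) ℝ) :
    Lop r s u = rot (Pi.single r 1) (Pi.single s 1) u := by
  funext j
  simp [Lop, rot_apply, angular_apply, linForm_single, dirDeriv_single, contract_single,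
    Pi.single_apply]

end RealTuples

end OrthogonalTuples

open OrthogonalTuples in
theorem Hk2_irreducible_general {σ K : Type*} [Fintype σ] [Field K] [CharZero K]
    (hσ : 3 ≤ Fintype.card σ) (hσ' : Fintype.card σ ≠ 4) {k : ℕ} (hk : 1 ≤ k) :
    IsRotInvariant (harmonicTuples σ K k) ∧
      ∀ W ≤ harmonicTuples σ K k, IsRotInvariant W → W = ⊥ ∨ W = harmonicTuples σ K k := by
  obtain ⟨k, rfl⟩ := Nat.exists_eq_add_of_le' hk
  refine ⟨isRotInvariant_harmonicTuples _, fun W hWH hW => or_iff_not_imp_left.2 fun hW0 => ?_⟩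
  let L := AlgebraicClosure K
  have : CharZero L := charZero_of_injective_algebraMap (algebraMap K L).injective
  have hWL : baseChange L W ≤ harmonicTuples σ L (k + 1) :=
    (baseChange_mono L hWH).trans_eq (baseChange_harmonicTuples _)
  have hWL0 : baseChange L W ≠ ⊥ := by
    rw [← baseChange_bot (K := K)]
    exact (baseChange_injective σ K L).ne hW0
  refine baseChange_injective σ K L ?_
  rw [baseChange_harmonicTuples]
  exact eq_harmonicTuples_of_isAlgClosed hσ hσ' hWL hW.baseChange hWL0

/-- for `n ≥ 3`, `n ≠ 4` and `k ≥ 1`, the subspace `Ĥ_{k,2}` is invariant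
under all `L_{r,s}` and irreducible: its only `L_{r,s}`-invariant ℝ-subspaces are `{0}`
and itself. -/
theorem Hk2_irreducible (n : ℕ) (hn : 3 ≤ n) (hn4 : n ≠ 4) (k : ℕ) (hk : 1 ≤ k) :
    (∀ r s : Fin n, r < s → ∀ u ∈ Hk2Set n k, Lop r s u ∈ Hk2Set n k) ∧
    (∀ W : Submodule ℝ (Fin n → MvPolynomial (Fin n) ℝ),
      (W : Set (Fin n → MvPolynomial (Fin n) ℝ)) ⊆ Hk2Set n k →
      (∀ r s : Fin n, r < s → ∀ u ∈ W, Lop r s u ∈ W) →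
      (W : Set (Fin n → MvPolynomial (Fin n) ℝ)) = {0} ∨
        (W : Set (Fin n → MvPolynomial (Fin n) ℝ)) = Hk2Set n k) := by
  have h := Hk2_irreducible_general (σ := Fin n) (K := ℝ) (by simpa) (by simpa) hk
  simp only [OrthogonalTuples.Hk2Set_eq_coe, OrthogonalTuples.Lop_eq_rot, SetLike.coe_subset_coe]
  refine ⟨fun r s _ => h.1 _ _, fun W hWH hW => ?_⟩
  simpa only [← Submodule.bot_coe (R := ℝ), SetLike.coe_set_eq] using
    h.2 W hWH (OrthogonalTuples.isRotInvariant_of_lt hW)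
end
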